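/- arXiv:1907.01178 — 2 statements merged into one kernel-verified Lean document; each statement's English description precedes it below -/
import Mathlib

section
/- Let x1, x2, x3 > 0 with x1 + x2 + x3 = 1. The Arnoux–Rauzy map T^{x1,x2,x3} is minimal if and only if (x1, x2, x3) belongs to the Rauzy gasket 𝓡. -/
open Set

noncomputable section

local instance : Fact ((0:ℝ) < 1) := ⟨one_pos⟩

/-- Representative in `[0,1)` of a point of the circle `ℝ/ℤ`. -/
def rep (x : AddCircle (1:ℝ)) : ℝ := (AddCircle.equivIco 1 0 x : ℝ)

/-- Projection `ℝ → ℝ/ℤ`. -/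
def toCirc (t : ℝ) : AddCircle (1:ℝ) := (t : AddCircle (1:ℝ))

/-- The Arnoux–Rauzy map `T^{x1,x2,x3}` of `ℝ/ℤ`: on each half of the interval of
lengths `x j` (for `j = 1,2,3`, starting at `c (j-1) = x1 + ⋯ + x(j-1)`) it translates
by `± x j / 2 + 1/2`. -/
def ARmap (x1 x2 x3 : ℝ) (u : AddCircle (1:ℝ)) : AddCircle (1:ℝ) :=
  if rep u < x1/2 then toCirc (rep u + x1/2 + 1/2)
  else if rep u < x1 then toCirc (rep u - x1/2 + 1/2)
  else if rep u < x1 + x2/2 then toCirc (rep u + x2/2 + 1/2)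
  else if rep u < x1 + x2 then toCirc (rep u - x2/2 + 1/2)
  else if rep u < x1 + x2 + x3/2 then toCirc (rep u + x3/2 + 1/2)
  else toCirc (rep u - x3/2 + 1/2)

/-- One branch of the Rauzy subtractive algorithm. -/
def rauzyStepAt (j : Fin 3) (x : Fin 3 → ℝ) : Fin 3 → ℝ :=
  fun i => (if i = j then 2 * x j - 1 else x i) / x j

/-- The Rauzy gasket. -/
def InRauzyGasket (x : Fin 3 → ℝ) : Prop :=
  (∀ i, 0 ≤ x i) ∧ x 0 + x 1 + x 2 = 1 ∧
  ∃ seq : ℕ → (Fin 3 → ℝ), seq 0 = x ∧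
    ∀ n, ∃ j, 1/2 < seq n j ∧ seq (n + 1) = rauzyStepAt j (seq n)

/-- A self-map of the circle is minimal if every forward orbit is dense. -/
def IsMinimal (G : AddCircle (1:ℝ) → AddCircle (1:ℝ)) : Prop :=
  ∀ u : AddCircle (1:ℝ), Dense (Set.range fun n : ℕ => G^[n] u)

open Filter

set_option linter.unusedVariables false
set_option linter.unusedSectionVars false
set_option linter.unnecessarySeqFocus false

/-- swap of the halves of the three intervals -/
def Sm (a b c u : ℝ) : ℝ :=
  if u < a/2 then u + a/2 else if u < a then u - a/2
  else if u < a + b/2 then u + b/2 else if u < a + b then u - b/2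
  else if u < a + b + c/2 then u + c/2 else u - c/2

/-- half turn of the circle of length `l` -/
def Rm (l u : ℝ) : ℝ := if u < l/2 then u + l/2 else u - l/2

def Tm (a b c u : ℝ) : ℝ := Rm (a+b+c) (Sm a b c u)
def Ti (a b c u : ℝ) : ℝ := Sm a b c (Rm (a+b+c) u)

/-- embedding of the induced circle -/
def ph (a b c v : ℝ) : ℝ := if v < (a-b-c)/2 then v + (a+b+c)/2 else v - (a-b-c)/2

/-- rotation conjugacy -/
def ps (a b c v : ℝ) : ℝ := if v < b + c then v + a else v - (b+c)

lemma Rm_mem {l u : ℝ} (h0 : 0 ≤ u) (h1 : u < l) : 0 ≤ Rm l u ∧ Rm l u < l := by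
  unfold Rm; split_ifs <;> constructor <;> linarith

lemma Rm_Rm {l u : ℝ} (h0 : 0 ≤ u) (h1 : u < l) : Rm l (Rm l u) = u := by
  unfold Rm; split_ifs <;> linarith


lemma Sm_mem {a b c u : ℝ} (ha : 0 < a) (hb : 0 < b) (hc : 0 < c)
    (h0 : 0 ≤ u) (h1 : u < a+b+c) : 0 ≤ Sm a b c u ∧ Sm a b c u < a+b+c := by
  unfold Sm; split_ifs <;> constructor <;> linarith

lemma Sm1 {a b c u : ℝ} (ha : 0 < a) (hb : 0 < b) (hc : 0 < c)
    (h1 : u < a/2) : Sm a b c u = u + a/2 := by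
  unfold Sm; split_ifs <;> linarith
lemma Sm2 {a b c u : ℝ} (ha : 0 < a) (hb : 0 < b) (hc : 0 < c)
    (h0 : a/2 ≤ u) (h1 : u < a) : Sm a b c u = u - a/2 := by
  unfold Sm; split_ifs <;> linarith
lemma Sm3 {a b c u : ℝ} (ha : 0 < a) (hb : 0 < b) (hc : 0 < c)
    (h0 : a ≤ u) (h1 : u < a + b/2) : Sm a b c u = u + b/2 := by
  unfold Sm; split_ifs <;> linarith
lemma Sm4 {a b c u : ℝ} (ha : 0 < a) (hb : 0 < b) (hc : 0 < c)
    (h0 : a + b/2 ≤ u) (h1 : u < a + b) : Sm a b c u = u - b/2 := by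
  unfold Sm; split_ifs <;> linarith
lemma Sm5 {a b c u : ℝ} (ha : 0 < a) (hb : 0 < b) (hc : 0 < c)
    (h0 : a + b ≤ u) (h1 : u < a + b + c/2) : Sm a b c u = u + c/2 := by
  unfold Sm; split_ifs <;> linarith
lemma Sm6 {a b c u : ℝ} (ha : 0 < a) (hb : 0 < b) (hc : 0 < c)
    (h0 : a + b + c/2 ≤ u) : Sm a b c u = u - c/2 := by
  unfold Sm; split_ifs <;> linarith

lemma cases6 {a b c : ℝ} (ha : 0 < a) (hb : 0 < b) (hc : 0 < c)
    (u : ℝ) : u < a/2 ∨ (a/2 ≤ u ∧ u < a) ∨ (a ≤ u ∧ u < a + b/2) ∨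
    (a + b/2 ≤ u ∧ u < a + b) ∨ (a + b ≤ u ∧ u < a + b + c/2) ∨ a + b + c/2 ≤ u := by
  by_contra! h
  obtain ⟨h1, h2, h3, h4, h5, h6⟩ := h
  linarith [h5 (h4 (h3 (h2 h1)))]

lemma Sm_Sm {a b c u : ℝ} (ha : 0 < a) (hb : 0 < b) (hc : 0 < c)
    (h0 : 0 ≤ u) (h1 : u < a+b+c) : Sm a b c (Sm a b c u) = u := by
  rcases cases6 ha hb hc u with h | h | h | h | h | h
  · rw [Sm1 ha hb hc h, Sm2 ha hb hc (by linarith) (by linarith)]; ring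
  · rw [Sm2 ha hb hc h.1 h.2, Sm1 ha hb hc (by linarith)]; ring
  · rw [Sm3 ha hb hc h.1 h.2, Sm4 ha hb hc (by linarith) (by linarith)]; ring
  · rw [Sm4 ha hb hc h.1 h.2, Sm3 ha hb hc (by linarith) (by linarith)]; ring
  · rw [Sm5 ha hb hc h.1 h.2, Sm6 ha hb hc (by linarith)]; ring
  · rw [Sm6 ha hb hc h, Sm5 ha hb hc (by linarith) (by linarith)]; ring

lemma Tm_mem {a b c u : ℝ} (ha : 0 < a) (hb : 0 < b) (hc : 0 < c)
    (h0 : 0 ≤ u) (h1 : u < a+b+c) : 0 ≤ Tm a b c u ∧ Tm a b c u < a+b+c := by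
  have := Sm_mem ha hb hc h0 h1
  exact Rm_mem this.1 this.2

lemma Ti_mem {a b c u : ℝ} (ha : 0 < a) (hb : 0 < b) (hc : 0 < c)
    (h0 : 0 ≤ u) (h1 : u < a+b+c) : 0 ≤ Ti a b c u ∧ Ti a b c u < a+b+c := by
  have := Rm_mem h0 h1
  exact Sm_mem ha hb hc this.1 this.2

lemma Ti_Tm {a b c u : ℝ} (ha : 0 < a) (hb : 0 < b) (hc : 0 < c)
    (h0 : 0 ≤ u) (h1 : u < a+b+c) : Ti a b c (Tm a b c u) = u := by
  have := Sm_mem ha hb hc h0 h1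
  unfold Ti Tm
  rw [Rm_Rm this.1 this.2, Sm_Sm ha hb hc h0 h1]

lemma Tm_Ti {a b c u : ℝ} (ha : 0 < a) (hb : 0 < b) (hc : 0 < c)
    (h0 : 0 ≤ u) (h1 : u < a+b+c) : Tm a b c (Ti a b c u) = u := by
  have := Rm_mem h0 h1
  unfold Ti Tm
  rw [Sm_Sm ha hb hc this.1 this.2, Rm_Rm h0 h1]

-- rotation
lemma ps_mem {a b c u : ℝ} (ha : 0 < a) (hb : 0 < b) (hc : 0 < c)
    (h0 : 0 ≤ u) (h1 : u < b+c+a) : 0 ≤ ps a b c u ∧ ps a b c u < a+b+c := by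
  unfold ps; split_ifs <;> constructor <;> linarith

lemma ps_Rm {a b c u : ℝ} (ha : 0 < a) (hb : 0 < b) (hc : 0 < c)
    (h0 : 0 ≤ u) (h1 : u < b+c+a) : ps a b c (Rm (b+c+a) u) = Rm (a+b+c) (ps a b c u) := by
  unfold ps Rm
  split_ifs <;> first | linarith | (exfalso; linarith)

lemma ps_Sm {a b c u : ℝ} (ha : 0 < a) (hb : 0 < b) (hc : 0 < c)
    (h0 : 0 ≤ u) (h1 : u < b+c+a) : ps a b c (Sm b c a u) = Sm a b c (ps a b c u) := by
  have e1 : ∀ v, v < b + c → ps a b c v = v + a := fun v hv => if_pos hv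
  have e2 : ∀ v, b + c ≤ v → ps a b c v = v - (b+c) := fun v hv => if_neg (not_lt.2 hv)
  rcases cases6 hb hc ha u with h | h | h | h | h | h
  · rw [Sm1 hb hc ha h, e1 u (by linarith), e1 _ (by linarith),
      Sm3 ha hb hc (by linarith) (by linarith)]; ring
  · rw [Sm2 hb hc ha h.1 h.2, e1 u (by linarith), e1 _ (by linarith),
      Sm4 ha hb hc (by linarith) (by linarith)]; ring
  · rw [Sm3 hb hc ha h.1 h.2, e1 u (by linarith), e1 _ (by linarith),
      Sm5 ha hb hc (by linarith) (by linarith)]; ring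
  · rw [Sm4 hb hc ha h.1 h.2, e1 u (by linarith), e1 _ (by linarith),
      Sm6 ha hb hc (by linarith)]; ring
  · rw [Sm5 hb hc ha h.1 h.2, e2 u (by linarith), e2 _ (by linarith),
      Sm1 ha hb hc (by linarith)]; ring
  · rw [Sm6 hb hc ha h, e2 u (by linarith), e2 _ (by linarith),
      Sm2 ha hb hc (by linarith) (by linarith)]; ring

lemma ps_Tm {a b c u : ℝ} (ha : 0 < a) (hb : 0 < b) (hc : 0 < c)
    (h0 : 0 ≤ u) (h1 : u < b+c+a) : ps a b c (Tm b c a u) = Tm a b c (ps a b c u) := by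
  have := Sm_mem hb hc ha h0 h1
  unfold Tm
  rw [ps_Rm ha hb hc this.1 this.2, ps_Sm ha hb hc h0 h1]

lemma ps_Ti {a b c u : ℝ} (ha : 0 < a) (hb : 0 < b) (hc : 0 < c)
    (h0 : 0 ≤ u) (h1 : u < b+c+a) : ps a b c (Ti b c a u) = Ti a b c (ps a b c u) := by
  have := Rm_mem h0 h1
  unfold Ti
  rw [ps_Sm ha hb hc this.1 this.2, ps_Rm ha hb hc h0 h1]

-- induction

lemma ph_mem {a b c u : ℝ} (ha : 0 < a) (hb : 0 < b) (hc : 0 < c) (hj : b + c < a)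
    (h0 : 0 ≤ u) (h1 : u < a) : 0 ≤ ph a b c u ∧ ph a b c u < a := by
  unfold ph; split_ifs <;> constructor <;> linarith

lemma ph_Rm {a b c u : ℝ} (ha : 0 < a) (hb : 0 < b) (hc : 0 < c) (hj : b + c < a)
    (h0 : 0 ≤ u) (h1 : u < a) : ph a b c (Rm a u) = Sm a b c (ph a b c u) := by
  have h2 := ph_mem ha hb hc hj h0 h1
  have : Sm a b c (ph a b c u) = Rm a (ph a b c u) := by
    unfold Sm Rm; split_ifs <;> first | rfl | (exfalso; linarith)
  rw [this]
  unfold ph Rm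
  split_ifs <;> first | linarith | (exfalso; linarith)

lemma ph_Sm_lt {a b c u : ℝ} (ha : 0 < a) (hb : 0 < b) (hc : 0 < c) (hj : b + c < a)
    (h0 : 0 ≤ u) (h1 : u < a-b-c) :
    ph a b c (Sm (a-b-c) b c u) = Rm (a+b+c) (ph a b c u) := by
  unfold Sm ph Rm
  split_ifs <;> first | linarith | (exfalso; linarith)

lemma R_ph_ge {a b c u : ℝ} (ha : 0 < a) (hb : 0 < b) (hc : 0 < c) (hj : b + c < a)
    (h0 : a-b-c ≤ u) (h1 : u < a) : Rm (a+b+c) (ph a b c u) = u + (b+c) := by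
  unfold ph Rm
  split_ifs <;> first | linarith | (exfalso; linarith)

lemma Sm_ge {a b c u : ℝ} (ha : 0 < a) (hb : 0 < b) (hc : 0 < c) (hj : b + c < a)
    (h0 : a-b-c ≤ u) (h1 : u < a) : Sm a b c (u + (b+c)) = Sm (a-b-c) b c u + (b+c) 
    ∧ a-b-c ≤ Sm (a-b-c) b c u ∧ Sm (a-b-c) b c u < a := by
  refine ⟨?_, ?_⟩
  · have ha' : 0 < a-b-c := by linarith
    rcases cases6 ha' hb hc u with h | h | h | h | h | h
    · linarith
    · linarith
    · rw [Sm3 ha' hb hc h.1 h.2, Sm3 ha hb hc (by linarith) (by linarith)]; ring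
    · rw [Sm4 ha' hb hc h.1 h.2, Sm4 ha hb hc (by linarith) (by linarith)]; ring
    · rw [Sm5 ha' hb hc h.1 h.2, Sm5 ha hb hc (by linarith) (by linarith)]; ring
    · rw [Sm6 ha' hb hc h, Sm6 ha hb hc (by linarith)]; ring
  · unfold Sm
    split_ifs <;> constructor <;> first | linarith | (exfalso; linarith)

lemma ph_Sm_ge {a b c u : ℝ} (ha : 0 < a) (hb : 0 < b) (hc : 0 < c) (hj : b + c < a)
    (h0 : a-b-c ≤ u) (h1 : u < a) :
    ph a b c (Sm (a-b-c) b c u) = Rm (a+b+c) (Sm a b c (Rm (a+b+c) (ph a b c u))) := by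
  have h := Sm_ge ha hb hc hj h0 h1
  rw [R_ph_ge ha hb hc hj h0 h1, h.1, ← R_ph_ge ha hb hc hj h.2.1 h.2.2, Rm_Rm]
  · exact (ph_mem ha hb hc hj (by linarith) h.2.2).1
  · linarith [(ph_mem ha hb hc hj (by linarith) h.2.2).2]

lemma Sm'_mem {a b c u : ℝ} (ha : 0 < a) (hb : 0 < b) (hc : 0 < c) (hj : b + c < a)
    (h0 : 0 ≤ u) (h1 : u < a) : 0 ≤ Sm (a-b-c) b c u ∧ Sm (a-b-c) b c u < a := by
  have := Sm_mem (a := a-b-c) (u := u) (by linarith) hb hc h0 (by linarith)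
  exact ⟨this.1, by linarith⟩

lemma Tm'_eq {a b c : ℝ} (ha : 0 < a) (hb : 0 < b) (hc : 0 < c) (hj : b + c < a)
    (u : ℝ) : Tm (a-b-c) b c u = Rm a (Sm (a-b-c) b c u) := by
  unfold Tm; congr 1; ring

lemma Ti'_eq {a b c : ℝ} (ha : 0 < a) (hb : 0 < b) (hc : 0 < c) (hj : b + c < a)
    (u : ℝ) : Ti (a-b-c) b c u = Sm (a-b-c) b c (Rm a u) := by
  unfold Ti; congr 2; ring

lemma ph_Tm_lt {a b c u : ℝ} (ha : 0 < a) (hb : 0 < b) (hc : 0 < c) (hj : b + c < a)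
    (h0 : 0 ≤ u) (h1 : u < a-b-c) :
    ph a b c (Tm (a-b-c) b c u) = Ti a b c (ph a b c u) := by
  have h := Sm'_mem ha hb hc hj h0 (by linarith)
  rw [Tm'_eq ha hb hc hj, ph_Rm ha hb hc hj h.1 h.2, ph_Sm_lt ha hb hc hj h0 h1]; rfl

lemma ph_Tm_ge {a b c u : ℝ} (ha : 0 < a) (hb : 0 < b) (hc : 0 < c) (hj : b + c < a)
    (h0 : a-b-c ≤ u) (h1 : u < a) :
    ph a b c (Tm (a-b-c) b c u) = Ti a b c (Ti a b c (ph a b c u)) := by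
  have h := Sm'_mem ha hb hc hj (u := u) (by linarith) (by linarith)
  rw [Tm'_eq ha hb hc hj, ph_Rm ha hb hc hj h.1 h.2, ph_Sm_ge ha hb hc hj h0 h1]; rfl

lemma ph_Ti_lt {a b c u : ℝ} (ha : 0 < a) (hb : 0 < b) (hc : 0 < c) (hj : b + c < a)
    (h0 : 0 ≤ u) (h1 : u < a) (h2 : Rm a u < a-b-c) :
    ph a b c (Ti (a-b-c) b c u) = Tm a b c (ph a b c u) := by
  have h := Rm_mem h0 h1
  rw [Ti'_eq ha hb hc hj, ph_Sm_lt ha hb hc hj h.1 h2, ph_Rm ha hb hc hj h0 h1]; rfl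

lemma ph_Ti_ge {a b c u : ℝ} (ha : 0 < a) (hb : 0 < b) (hc : 0 < c) (hj : b + c < a)
    (h0 : 0 ≤ u) (h1 : u < a) (h2 : a-b-c ≤ Rm a u) :
    ph a b c (Ti (a-b-c) b c u) = Tm a b c (Tm a b c (ph a b c u)) := by
  have h := Rm_mem h0 h1
  rw [Ti'_eq ha hb hc hj, ph_Sm_ge ha hb hc hj h2 h.2, ph_Rm ha hb hc hj h0 h1]; rfl


def SMin (a b c : ℝ) : Prop :=
  ∀ O : Set ℝ, O.Nonempty → (∀ u ∈ O, 0 ≤ u ∧ u < a+b+c) → (∀ u ∈ O, Tm a b c u ∈ O) →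
    (∀ u ∈ O, Ti a b c u ∈ O) → ∀ p q, 0 ≤ p → p < q → q ≤ a+b+c → ∃ u ∈ O, p ≤ u ∧ u < q


lemma SMin_rot {a b c : ℝ} (ha : 0 < a) (hb : 0 < b) (hc : 0 < c)
    (h : SMin a b c) : SMin b c a := by
  intro O hne hO hT hTi p q hp hpq hq
  have key : ∀ p' q', 0 ≤ p' → p' < q' → q' ≤ a+b+c → ∃ v ∈ O, p' ≤ ps a b c v ∧ ps a b c v < q' := by
    intro p' q' h1 h2 h3
    obtain ⟨u, ⟨v, hv, rfl⟩, hu⟩ := h (ps a b c '' O) (hne.image _)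
      (by rintro _ ⟨v, hv, rfl⟩; exact ps_mem ha hb hc (hO v hv).1 (hO v hv).2)
      (by rintro _ ⟨v, hv, rfl⟩; rw [← ps_Tm ha hb hc (hO v hv).1 (hO v hv).2]
          exact ⟨_, hT v hv, rfl⟩)
      (by rintro _ ⟨v, hv, rfl⟩; rw [← ps_Ti ha hb hc (hO v hv).1 (hO v hv).2]
          exact ⟨_, hTi v hv, rfl⟩) p' q' h1 h2 h3
    exact ⟨v, hv, hu⟩
  rcases lt_or_ge p (b+c) with h1 | h1
  · obtain ⟨v, hv, h2, h3⟩ := key (p+a) (min q (b+c) + a) (by linarith)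
      (by linarith [lt_min hpq h1]) (by linarith [min_le_right q (b+c)])
    have := hO v hv
    have h4 := min_le_left q (b+c)
    have h5 := min_le_right q (b+c)
    refine ⟨v, hv, ?_⟩
    unfold ps at h2 h3
    split_ifs at h2 h3 <;> constructor <;> linarith
  · obtain ⟨v, hv, h2, h3⟩ := key (p-(b+c)) (q-(b+c)) (by linarith)
      (by linarith) (by linarith)
    have := hO v hv
    refine ⟨v, hv, ?_⟩
    unfold ps at h2 h3
    split_ifs at h2 h3 <;> constructor <;> linarith

lemma SMin_step {a b c : ℝ} (ha : 0 < a) (hb : 0 < b) (hc : 0 < c)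
    (hj : b + c < a) (h : SMin a b c) : SMin (a-b-c) b c := by
  intro O hne hO hT hTi p q hp hpq hq
  replace hO : ∀ u ∈ O, 0 ≤ u ∧ u < a := fun u hu => ⟨(hO u hu).1, by linarith [(hO u hu).2]⟩
  have hph : ∀ v ∈ O, 0 ≤ ph a b c v ∧ ph a b c v < a :=
    fun v hv => ph_mem ha hb hc hj (hO v hv).1 (hO v hv).2
  have key : ∀ p' q', 0 ≤ p' → p' < q' → q' ≤ a → ∃ v ∈ O, p' ≤ ph a b c v ∧ ph a b c v < q' := by
    intro p' q' h1 h2 h3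
    have hmain := h (ph a b c '' O ∪ {u | a ≤ u ∧ u < a+b+c ∧ Ti a b c u ∈ ph a b c '' O})
      ((hne.image _).mono subset_union_left)
    have hmain2 := fun A B C => hmain A B C p' q' h1 h2 (by linarith)
    suffices hs : ∃ u ∈ (ph a b c '' O ∪ {u | a ≤ u ∧ u < a+b+c ∧ Ti a b c u ∈ ph a b c '' O}),
        p' ≤ u ∧ u < q' by
      obtain ⟨u, hu, hu'⟩ := hs
      rcases hu with ⟨v, hv, rfl⟩ | hu
      · exact ⟨v, hv, hu'⟩
      · linarith [hu.1]
    refine hmain2 ?_ ?_ ?_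
    · rintro u (⟨v, hv, rfl⟩ | hu)
      · exact ⟨(hph v hv).1, by linarith [(hph v hv).2]⟩
      · exact ⟨by linarith [hu.1], hu.2.1⟩
    · rintro u (⟨v, hv, rfl⟩ | ⟨hu1, hu2, v, hv, hu⟩)
      · have hm := Tm_mem ha hb hc (hph v hv).1 (by linarith [(hph v hv).2])
        rcases lt_or_ge (Rm a v) (a-b-c) with h5 | h5
        · left
          rw [← ph_Ti_lt ha hb hc hj (hO v hv).1 (hO v hv).2 h5]
          exact ⟨_, hTi v hv, rfl⟩
        · right
          refine ⟨?_, hm.2, ?_⟩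
          · have h6 := R_ph_ge ha hb hc hj h5 (Rm_mem (hO v hv).1 (hO v hv).2).2
            rw [ph_Rm ha hb hc hj (hO v hv).1 (hO v hv).2] at h6
            unfold Tm
            rw [h6]; linarith
          · rw [Ti_Tm ha hb hc (hph v hv).1 (by linarith [(hph v hv).2])]
            exact ⟨_, hv, rfl⟩
      · left
        have h0 : Tm a b c (ph a b c v) = u := by
          rw [hu, Tm_Ti ha hb hc (by linarith) hu2]
        have h5 : a-b-c ≤ Rm a v := by
          by_contra! h5
          rw [← ph_Ti_lt ha hb hc hj (hO v hv).1 (hO v hv).2 h5] at h0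
          linarith [(hph _ (hTi v hv)).2]
        rw [← h0, ← ph_Ti_ge ha hb hc hj (hO v hv).1 (hO v hv).2 h5]
        exact ⟨_, hTi v hv, rfl⟩
    · rintro u (⟨v, hv, rfl⟩ | ⟨hu1, hu2, hu⟩)
      · rcases lt_or_ge v (a-b-c) with h5 | h5
        · left
          rw [← ph_Tm_lt ha hb hc hj (hO v hv).1 h5]
          exact ⟨_, hT v hv, rfl⟩
        · right
          have hm := Ti_mem ha hb hc (hph v hv).1 (by linarith [(hph v hv).2])
          refine ⟨?_, hm.2, ?_⟩
          · have h7 := Sm_ge ha hb hc hj h5 (hO v hv).2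
            unfold Ti
            rw [R_ph_ge ha hb hc hj h5 (hO v hv).2, h7.1]
            linarith
          · rw [← ph_Tm_ge ha hb hc hj h5 (hO v hv).2]
            exact ⟨_, hT v hv, rfl⟩
      · left; exact hu
  rcases lt_or_ge p ((a-b-c)/2) with h1 | h1
  · obtain ⟨v, hv, h2, h3⟩ := key (p+(a+b+c)/2) (min q ((a-b-c)/2) + (a+b+c)/2) (by linarith)
      (by linarith [lt_min hpq h1]) (by linarith [min_le_right q ((a-b-c)/2)])
    have := hO v hv
    have h4 := min_le_left q ((a-b-c)/2)
    have h5 := min_le_right q ((a-b-c)/2)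
    refine ⟨v, hv, ?_⟩
    unfold ph at h2 h3
    split_ifs at h2 h3 <;> constructor <;> linarith
  · obtain ⟨v, hv, h2, h3⟩ := key (p-(a-b-c)/2) (q-(a-b-c)/2) (by linarith)
      (by linarith) (by linarith)
    have := hO v hv
    refine ⟨v, hv, ?_⟩
    unfold ph at h2 h3
    split_ifs at h2 h3 <;> constructor <;> linarith

lemma not_SMin_lt {a b c : ℝ} (ha : 0 < a) (hb : 0 < b) (hc : 0 < c)
    (h1 : a < b + c) (h2 : b < a + c) (h3 : c < a + b) : ¬ SMin a b c := by
  intro h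
  obtain ⟨M, hMa, hMb, hMc, hM1, hM2, hM3⟩ : ∃ M, a ≤ M ∧ b ≤ M ∧ c ≤ M ∧ M < a + b ∧ M < a + c ∧ M < b + c := by
    refine ⟨max a (max b c), by simp, by simp, by simp, ?_, ?_, ?_⟩ <;>
      refine max_lt ?_ (max_lt ?_ ?_) <;> linarith
  set v := a + b/2 + M/2 with hv
  have T1 : Tm a b c (v - a/2 - (a+b+c)/2) = v := by
    unfold Tm
    rw [Sm1 ha hb hc (by linarith)]
    unfold Rm; split_ifs <;> linarith
  have T2 : Tm a b c v = v + c/2 - (a+b+c)/2 := by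
    unfold Tm
    rw [Sm5 ha hb hc (by linarith) (by linarith)]
    unfold Rm; split_ifs <;> linarith
  have T3 : Tm a b c (v + c/2 - (a+b+c)/2) = v - a/2 - (a+b+c)/2 := by
    unfold Tm
    rw [Sm3 ha hb hc (by linarith) (by linarith)]
    unfold Rm; split_ifs <;> linarith
  have I1 := Ti_Tm ha hb hc (u := v - a/2 - (a+b+c)/2) (by linarith) (by linarith)
  have I2 := Ti_Tm ha hb hc (u := v) (by linarith) (by linarith)
  have I3 := Ti_Tm ha hb hc (u := v + c/2 - (a+b+c)/2) (by linarith) (by linarith)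
  rw [T1] at I1
  rw [T2] at I2
  rw [T3] at I3
  obtain ⟨w, hw, hw1, hw2⟩ := h {v - a/2 - (a+b+c)/2, v, v + c/2 - (a+b+c)/2} ⟨v, by simp⟩
    (by rintro u (rfl | rfl | rfl) <;> constructor <;> linarith)
    (by rintro u (rfl | rfl | rfl)
        · rw [T1]; simp
        · rw [T2]; simp
        · rw [T3]; simp)
    (by rintro u (rfl | rfl | rfl)
        · rw [I3]; simp
        · rw [I1]; simp
        · rw [I2]; simp) (a/2) a (by linarith) (by linarith) (by linarith)
  rcases hw with rfl | rfl | rfl <;> linarith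

lemma not_SMin_eq {a b c : ℝ} (ha : 0 < a) (hb : 0 < b) (hc : 0 < c)
    (h1 : a = b + c) : ¬ SMin a b c := by
  intro h
  have hmain := fun A B C => h
    {u | (b/2 ≤ u ∧ u < b + c/2) ∨ (a ≤ u ∧ u < a + b/2) ∨ (a + b + c/2 ≤ u ∧ u < a+b+c)}
    ⟨b/2, Or.inl ⟨le_rfl, by linarith⟩⟩ A B C 0 (b/2) le_rfl (by linarith) (by linarith)
  have hfalse : ¬ ∃ u ∈ {u | (b/2 ≤ u ∧ u < b + c/2) ∨ (a ≤ u ∧ u < a + b/2) ∨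
      (a + b + c/2 ≤ u ∧ u < a+b+c)}, 0 ≤ u ∧ u < b/2 := by
    rintro ⟨w, hw, hw1, hw2⟩
    rcases hw with hw | hw | hw <;> linarith [hw.1, hw.2]
  refine hfalse (hmain ?_ ?_ ?_)
  · rintro u (hw | hw | hw) <;> constructor <;> linarith [hw.1, hw.2]
  · rintro u (⟨h2, h3⟩ | ⟨h2, h3⟩ | ⟨h2, h3⟩)
    · right
      rcases lt_or_ge u (a/2) with h4 | h4
      · right
        unfold Tm
        rw [Sm1 ha hb hc h4]
        unfold Rm; split_ifs <;> constructor <;> linarith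
      · left
        unfold Tm
        rw [Sm2 ha hb hc h4 (by linarith)]
        unfold Rm; split_ifs <;> constructor <;> linarith
    · left
      unfold Tm
      rw [Sm3 ha hb hc h2 h3]
      unfold Rm; split_ifs <;> constructor <;> linarith
    · left
      unfold Tm
      rw [Sm6 ha hb hc h2]
      unfold Rm; split_ifs <;> constructor <;> linarith
  · rintro u (⟨h2, h3⟩ | ⟨h2, h3⟩ | ⟨h2, h3⟩)
    · right
      have e : Rm (a+b+c) u = u + a := by unfold Rm; split_ifs <;> linarith
      unfold Ti
      rw [e]
      rcases lt_or_ge u b with h4 | h4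
      · left
        rw [Sm4 ha hb hc (by linarith) (by linarith)]; constructor <;> linarith
      · right
        rw [Sm5 ha hb hc (by linarith) (by linarith)]; constructor <;> linarith
    · left
      have e : Rm (a+b+c) u = u - a := by unfold Rm; split_ifs <;> linarith
      unfold Ti
      rw [e, Sm1 ha hb hc (by linarith)]; constructor <;> linarith
    · left
      have e : Rm (a+b+c) u = u - a := by unfold Rm; split_ifs <;> linarith
      unfold Ti
      rw [e, Sm2 ha hb hc (by linarith) (by linarith)]; constructor <;> linarith

lemma SMin_base {a b c : ℝ} (ha : 0 < a) (hb : 0 < b) (hc : 0 < c)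
    (h : SMin a b c) : b + c < a ∨ c + a < b ∨ a + b < c := by
  by_contra! hh
  obtain ⟨h1, h2, h3⟩ := hh
  rcases h1.lt_or_eq with h1 | h1
  · rcases h2.lt_or_eq with h2 | h2
    · rcases h3.lt_or_eq with h3 | h3
      · exact not_SMin_lt ha hb hc h1 (by linarith) h3 h
      · exact not_SMin_eq hc ha hb h3 (SMin_rot hb hc ha (SMin_rot ha hb hc h))
    · exact not_SMin_eq hb hc ha h2 (SMin_rot ha hb hc h)
  · exact not_SMin_eq ha hb hc h1 h


/-- unnormalised Rauzy step -/
def ustep (j : Fin 3) (x : Fin 3 → ℝ) : Fin 3 → ℝ :=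
  fun i => if i = j then 2 * x j - (x 0 + x 1 + x 2) else x i

lemma SMin_ustep (x : Fin 3 → ℝ) (hx : ∀ i, 0 < x i) (h : SMin (x 0) (x 1) (x 2)) :
    ∃ j, (x 0 + x 1 + x 2)/2 < x j ∧
      (∀ i, 0 < ustep j x i) ∧ SMin (ustep j x 0) (ustep j x 1) (ustep j x 2) := by
  have h0 := hx 0
  have h1 := hx 1
  have h2 := hx 2
  rcases SMin_base h0 h1 h2 h with hj | hj | hj
  · refine ⟨0, by linarith, ?_, ?_⟩
    · intro i; fin_cases i <;> simp [ustep] <;> linarith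
    · have := SMin_step h0 h1 h2 hj h
      convert this using 1 <;> simp [ustep] <;> ring
  · refine ⟨1, by linarith, ?_, ?_⟩
    · intro i; fin_cases i <;> simp [ustep] <;> linarith
    · have := SMin_rot h2 h0 (by linarith) (SMin_rot (by linarith) h2 h0
        (SMin_step h1 h2 h0 hj (SMin_rot h0 h1 h2 h)))
      convert this using 1 <;> simp [ustep] <;> ring
  · refine ⟨2, by linarith, ?_, ?_⟩
    · intro i; fin_cases i <;> simp [ustep] <;> linarith
    · have := SMin_rot (by linarith) h0 h1
        (SMin_step h2 h0 h1 hj (SMin_rot h1 h2 h0 (SMin_rot h0 h1 h2 h)))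
      convert this using 1 <;> simp [ustep] <;> ring

lemma SMin_seq (x : Fin 3 → ℝ) (hx : ∀ i, 0 < x i) (h : SMin (x 0) (x 1) (x 2)) :
    ∃ y : ℕ → Fin 3 → ℝ, y 0 = x ∧ (∀ n i, 0 < y n i) ∧
      ∀ n, ∃ j, (y n 0 + y n 1 + y n 2)/2 < y n j ∧ y (n+1) = ustep j (y n) := by
  let Y := {x : Fin 3 → ℝ // (∀ i, 0 < x i) ∧ SMin (x 0) (x 1) (x 2)}
  have hstep : ∀ y : Y, ∃ z : Y, ∃ j, (y.1 0 + y.1 1 + y.1 2)/2 < y.1 j ∧ z.1 = ustep j y.1 := by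
    intro y
    obtain ⟨j, h1, h2, h3⟩ := SMin_ustep y.1 y.2.1 y.2.2
    exact ⟨⟨_, h2, h3⟩, j, h1, rfl⟩
  choose f hf using hstep
  let z : ℕ → Y := fun n => f^[n] ⟨x, hx, h⟩
  refine ⟨fun n => (z n).1, rfl, fun n => (z n).2.1, fun n => ?_⟩
  have : z (n+1) = f (z n) := Function.iterate_succ_apply' f n _
  simp only [this]
  exact hf (z n)

structure FInv (a b c : ℝ) (F : Filter ℝ) : Prop where
  ne : F.NeBot
  dom : ∀ᶠ u in F, 0 ≤ u ∧ u < a+b+c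
  tm : Tendsto (Tm a b c) F F
  ti : Tendsto (Ti a b c) F F

def Hit (F : Filter ℝ) (A : Set ℝ) : Prop := ∃ᶠ u in F, u ∈ A

def pc (a b c : ℝ) : Fin 3 → Bool → Set ℝ
  | 0, true => Ico 0 (a/2)
  | 0, false => Ico (a/2) a
  | 1, true => Ico a (a + b/2)
  | 1, false => Ico (a + b/2) (a + b)
  | 2, true => Ico (a + b) (a + b + c/2)
  | 2, false => Ico (a + b + c/2) (a + b + c)

def Av (l p g u : ℝ) : Prop := ¬ (p ≤ u ∧ u < p + g) ∧ ¬ (p ≤ u + l ∧ u + l < p + g)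

def Gap (l : ℝ) (F : Filter ℝ) (g : ℝ) : Prop :=
  ∃ p, 0 ≤ p ∧ p < l ∧ g ≤ l ∧ ∀ᶠ u in F, Av l p g u

structure StepOK (a b c a' b' c' : ℝ) (j : Fin 3) (F F' : Filter ℝ) : Prop where
  inv : FInv a' b' c' F'
  back : ∀ k σ, Hit F' (pc a' b' c' k σ) → Hit F (pc a b c k (!σ))
  hitj : ∃ σ, Hit F (pc a b c j σ)
  hit2 : (∀ k, ∃ σ, Hit F (pc a b c k σ)) → ∀ σ, Hit F (pc a b c j σ)
  gap : (∀ k σ, Hit F (pc a b c k σ)) → (∀ k σ, Hit F' (pc a' b' c' k σ)) →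
    ∀ g, Gap (a+b+c) F g → Gap (a'+b'+c') F' g

structure RotOK (a b c : ℝ) (F G : Filter ℝ) : Prop where
  inv : FInv b c a G
  hit : ∀ k σ, Hit F (pc a b c (k+1) σ) ↔ Hit G (pc b c a k σ)
  gap : ∀ g, Gap (a+b+c) F g → Gap (b+c+a) G g

def pull (f : ℝ → ℝ) (F : Filter ℝ) (D : Set ℝ) : Filter ℝ := comap f F ⊓ 𝓟 D

lemma pull_tendsto (f : ℝ → ℝ) (F : Filter ℝ) (D : Set ℝ) : Tendsto f (pull f F D) F :=
  tendsto_comap.mono_left inf_le_left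

lemma pull_dom (f : ℝ → ℝ) (F : Filter ℝ) (D : Set ℝ) : ∀ᶠ v in pull f F D, v ∈ D :=
  mem_inf_of_right (mem_principal_self D)

lemma pull_eventually {f : ℝ → ℝ} {F : Filter ℝ} {D : Set ℝ} {P : ℝ → Prop} :
    (∀ᶠ v in pull f F D, P v) ↔ ∀ᶠ u in F, ∀ v, f v = u → v ∈ D → P v := by
  unfold pull
  rw [eventually_inf_principal, eventually_comap]

lemma pull_neBot {f : ℝ → ℝ} {F : Filter ℝ} {D A : Set ℝ} (hA : Hit F A)
    (hs : ∀ u ∈ A, ∃ v ∈ D, f v = u) : (pull f F D).NeBot := by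
  unfold pull
  rw [inf_principal_neBot_iff]
  rintro U ⟨t, ht, htU⟩
  obtain ⟨u, hu, hut⟩ := (hA.and_eventually ht).exists
  obtain ⟨v, hv, rfl⟩ := hs u hu
  exact ⟨v, htU hut, hv⟩

lemma pull_map {f h h' : ℝ → ℝ} {F : Filter ℝ} {D : Set ℝ} (hh : Tendsto h F F)
    (hD : ∀ v ∈ D, h' v ∈ D) (he : ∀ v ∈ D, f (h' v) = h (f v) ∨ f (h' v) = h (h (f v))) :
    Tendsto h' (pull f F D) (pull f F D) := by
  have hf := pull_tendsto f F D
  have hd := pull_dom f F D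
  refine tendsto_inf.2 ⟨tendsto_comap_iff.2 ?_, tendsto_principal.2 ?_⟩
  · intro B hB
    have h1 : ∀ᶠ v in pull f F D, h (f v) ∈ B := (hh.comp hf) hB
    have h2 : ∀ᶠ v in pull f F D, h (h (f v)) ∈ B := ((hh.comp hh).comp hf) hB
    show ∀ᶠ v in pull f F D, f (h' v) ∈ B
    filter_upwards [h1, h2, hd] with v a1 a2 a3
    rcases he v a3 with e | e <;> rw [e] <;> assumption
  · filter_upwards [hd] with v hv using hD v hv

lemma hit_of {F G : Filter ℝ} {f : ℝ → ℝ} {A B D : Set ℝ} (hf : Tendsto f G F)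
    (hD : ∀ᶠ v in G, v ∈ D) (h : Hit G A) (hAB : ∀ v ∈ D, v ∈ A → f v ∈ B) : Hit F B := by
  refine hf.frequently ((h.and_eventually hD).mono ?_)
  rintro v ⟨h1, h2⟩
  exact hAB v h2 h1


lemma FInv.hit_exists {a b c : ℝ} (ha : 0 < a) (hb : 0 < b) (hc : 0 < c) {F : Filter ℝ} (hF : FInv a b c F)
    : ∃ k σ, Hit F (pc a b c k σ) := by
  by_contra! h
  have h01 := h 0 true
  have h00 := h 0 false
  have h11 := h 1 true
  have h10 := h 1 false
  have h21 := h 2 true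
  have h20 := h 2 false
  simp only [Hit, not_frequently, pc, mem_Ico] at *
  have hne := hF.ne
  have : ∀ᶠ u in F, False := by
    filter_upwards [hF.dom, h01, h00, h11, h10, h21, h20] with u a0 a1 a2 a3 a4 a5 a6
    rcases cases6 ha hb hc u with h | h | h | h | h | h
    · exact a1 ⟨a0.1, h⟩
    · exact a2 h
    · exact a3 h
    · exact a4 h
    · exact a5 h
    · exact a6 ⟨h, a0.2⟩
  exact hF.ne.ne (by simpa using this)

lemma rot_ok {a b c : ℝ} (ha : 0 < a) (hb : 0 < b) (hc : 0 < c) {F : Filter ℝ} (hF : FInv a b c F)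
    : RotOK a b c F (pull (ps a b c) F (Ico 0 (b+c+a))) := by
  have hdom := hF.dom
  set G := pull (ps a b c) F (Ico 0 (b+c+a)) with hG
  have hf : Tendsto (ps a b c) G F := pull_tendsto _ _ _
  have hd : ∀ᶠ v in G, v ∈ Ico 0 (b+c+a) := pull_dom _ _ _
  have hsur : ∀ u, 0 ≤ u → u < a+b+c → ∃ v ∈ Ico 0 (b+c+a), ps a b c v = u := by
    intro u h1 h2
    rcases lt_or_ge u a with h | h
    · refine ⟨u + (b+c), ⟨by linarith, by linarith⟩, ?_⟩
      unfold ps; split_ifs <;> linarith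
    · refine ⟨u - a, ⟨by linarith, by linarith⟩, ?_⟩
      unfold ps; split_ifs <;> linarith
  have hfr : ∀ A B : Set ℝ, Hit F A → (∀ v ∈ Ico 0 (b+c+a), ps a b c v ∈ A → v ∈ B) → Hit G B := by
    intro A B hA hAB hB
    rw [hG, pull_eventually] at hB
    refine hA ?_
    filter_upwards [hB, hdom] with u hu hu2 huA
    obtain ⟨v, hv, rfl⟩ := hsur u hu2.1 hu2.2
    exact hu v rfl hv (hAB v hv huA)
  refine ⟨⟨?_, ?_, ?_, ?_⟩, ?_, ?_⟩
  · have hne := hF.ne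
    exact pull_neBot (A := Ico 0 (a+b+c)) hdom.frequently (fun u hu => hsur u hu.1 hu.2)
  · filter_upwards [hd] with v hv using hv
  · refine pull_map hF.tm (fun v hv => Tm_mem hb hc ha hv.1 hv.2) (fun v hv => Or.inl ?_)
    exact ps_Tm ha hb hc hv.1 hv.2
  · refine pull_map hF.ti (fun v hv => Ti_mem hb hc ha hv.1 hv.2) (fun v hv => Or.inl ?_)
    exact ps_Ti ha hb hc hv.1 hv.2
  · intro k σ
    have key : ∀ v ∈ Ico 0 (b+c+a), (ps a b c v ∈ pc a b c (k+1) σ ↔ v ∈ pc b c a k σ) := by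
      rintro v ⟨h1, h2⟩
      unfold ps
      fin_cases k <;> cases σ <;> simp [pc] <;> split_ifs <;> constructor <;>
        rintro ⟨h3, h4⟩ <;> constructor <;> linarith
    exact ⟨fun h => hfr _ _ h (fun v hv => (key v hv).1),
      fun h => hit_of hf hd h (fun v hv => (key v hv).2)⟩
  · rintro g ⟨p, hp0, hp1, hg, hp⟩
    obtain ⟨p', hp', rfl⟩ := hsur p hp0 hp1
    refine ⟨p', hp'.1, hp'.2, by linarith, ?_⟩
    filter_upwards [hf.eventually hp, hd] with v h1 h2
    have h3 := h2.1
    have h4 := h2.2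
    have h5 := hp'.1
    have h6 := hp'.2
    obtain ⟨h7, h8⟩ := h1
    by_contra hcon
    have hcon : (p' ≤ v ∧ v < p' + g) ∨ (p' ≤ v + (b+c+a) ∧ v + (b+c+a) < p' + g) := by
      unfold Av at hcon; tauto
    have : (ps a b c p' ≤ ps a b c v ∧ ps a b c v < ps a b c p' + g) ∨
        (ps a b c p' ≤ ps a b c v + (a+b+c) ∧ ps a b c v + (a+b+c) < ps a b c p' + g) := by
      unfold ps
      rcases hcon with ⟨h9, h10⟩ | ⟨h9, h10⟩ <;> split_ifs <;>
        first
        | (left; constructor <;> linarith)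
        | (right; constructor <;> linarith)
        | (exfalso; linarith)
    tauto


lemma Av_Rm {l p g v : ℝ} (hp : 0 ≤ p) (hp' : p < l) (hv : 0 ≤ v) (hv' : v < l) (hg : g ≤ l)
    (h : Av l p g (Rm l v)) : Av l (Rm l p) g v := by
  by_contra hcon
  have hcon : (Rm l p ≤ v ∧ v < Rm l p + g) ∨ (Rm l p ≤ v + l ∧ v + l < Rm l p + g) := by
    unfold Av at hcon; tauto
  have : (p ≤ Rm l v ∧ Rm l v < p + g) ∨ (p ≤ Rm l v + l ∧ Rm l v + l < p + g) := by
    unfold Rm at *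
    rcases hcon with ⟨h9, h10⟩ | ⟨h9, h10⟩ <;> split_ifs at * <;>
      first
      | (left; constructor <;> linarith)
      | (right; constructor <;> linarith)
      | (exfalso; linarith)
  unfold Av at h; tauto

lemma pc1_sub {a b c : ℝ} (hb : 0 < b) {σ : Bool} {u : ℝ} (h : u ∈ pc a b c 1 σ) : a ≤ u ∧ u < a + b := by
  cases σ <;> simp only [pc, mem_Ico] at h <;> constructor <;> linarith [h.1, h.2]

lemma pc2_sub {a b c : ℝ} (hc : 0 < c) {σ : Bool} {u : ℝ} (h : u ∈ pc a b c 2 σ) : a + b ≤ u ∧ u < a + b + c := by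
  cases σ <;> simp only [pc, mem_Ico] at h <;> constructor <;> linarith [h.1, h.2]


lemma ph_sur {a b c : ℝ} (ha : 0 < a) (hb : 0 < b) (hc : 0 < c) (hj : b + c < a)
    {u : ℝ} (h1 : 0 ≤ u) (h2 : u < a) : ∃ v ∈ Ico 0 a, ph a b c v = u := by
  rcases lt_or_ge u ((a+b+c)/2) with h | h
  · refine ⟨u + (a-b-c)/2, ⟨by linarith, by linarith⟩, ?_⟩
    unfold ph; split_ifs <;> linarith
  · refine ⟨u - (a+b+c)/2, ⟨by linarith, by linarith⟩, ?_⟩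
    unfold ph; split_ifs <;> linarith

lemma Av_ph {a b c : ℝ} (ha : 0 < a) (hb : 0 < b) (hc : 0 < c) (hj : b + c < a)
    {q g v : ℝ} (hv : 0 ≤ v) (hv' : v < a) (hq : 0 ≤ ph a b c q)
    (hq0 : 0 ≤ q) (hq1 : q < a) (hg : ph a b c q + g ≤ a)
    (h : ¬ (ph a b c q ≤ ph a b c v ∧ ph a b c v < ph a b c q + g)) : Av a q g v := by
  by_contra hcon
  have hcon : (q ≤ v ∧ v < q + g) ∨ (q ≤ v + a ∧ v + a < q + g) := by
    unfold Av at hcon; tauto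
  apply h
  unfold ph at *
  rcases hcon with ⟨h9, h10⟩ | ⟨h9, h10⟩ <;> split_ifs at * <;> constructor <;> linarith

lemma Ti_J {a b c : ℝ} (ha : 0 < a) (hb : 0 < b) (hc : 0 < c) (hj : b + c < a)
    {u : ℝ} (h1 : a ≤ u) (h2 : u < a + b + c) : 0 ≤ Ti a b c u ∧ Ti a b c u < a ∧
    (u < a + (b+c)/2 → a/2 ≤ Ti a b c u) ∧ (a + (b+c)/2 ≤ u → Ti a b c u < a/2) := by
  have e : Rm (a+b+c) u = u - (a+b+c)/2 := by unfold Rm; split_ifs <;> linarith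
  unfold Ti
  rw [e]
  rcases lt_or_ge u (a + (b+c)/2) with h | h
  · rw [Sm1 ha hb hc (by linarith)]
    exact ⟨by linarith, by linarith, fun _ => by linarith, fun _ => by linarith⟩
  · rw [Sm2 ha hb hc (by linarith) (by linarith)]
    exact ⟨by linarith, by linarith, fun _ => by linarith, fun _ => by linarith⟩

lemma Tm_J {a b c : ℝ} (ha : 0 < a) (hb : 0 < b) (hc : 0 < c) (hj : b + c < a)
    {u w : ℝ} (hw : Sm a b c u = w) (h1 : a ≤ w) (h2 : w < a + b + c) : 
    Tm a b c u = w - (a+b+c)/2 := by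
  unfold Tm
  rw [hw]; unfold Rm; split_ifs <;> linarith

lemma Sm_I1 {a b c : ℝ} (ha : 0 < a) (hb : 0 < b) (hc : 0 < c) (hj : b + c < a)
    {u : ℝ} (h1 : a ≤ u) (h2 : u < a + b) : a ≤ Sm a b c u ∧ Sm a b c u < a + b := by
  rcases lt_or_ge u (a + b/2) with h | h
  · rw [Sm3 ha hb hc h1 h]; constructor <;> linarith
  · rw [Sm4 ha hb hc h h2]; constructor <;> linarith

lemma Sm_I2 {a b c : ℝ} (ha : 0 < a) (hb : 0 < b) (hc : 0 < c) (hj : b + c < a)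
    {u : ℝ} (h1 : a + b ≤ u) (h2 : u < a + b + c) :
    a + b ≤ Sm a b c u ∧ Sm a b c u < a + b + c := by
  rcases lt_or_ge u (a + b + c/2) with h | h
  · rw [Sm5 ha hb hc h1 h]; constructor <;> linarith
  · rw [Sm6 ha hb hc h]; constructor <;> linarith

/-- geometric heart of sign-flip -/
lemma back_geo {a b c : ℝ} (ha : 0 < a) (hb : 0 < b) (hc : 0 < c) (hj : b + c < a)
    {v : ℝ} (h1 : 0 ≤ v) (h2 : v < a) (k : Fin 3) (hk : k ≠ 0) (σ : Bool)
    (h : v ∈ pc (a-b-c) b c k σ) : Ti a b c (ph a b c v) ∈ pc a b c k (!σ) := by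
  have hge : a-b-c ≤ v := by
    fin_cases k
    · exact absurd rfl hk
    · exact (pc1_sub (a := a-b-c) (b := b) (c := c) (σ := σ) (u := v) hb h).1
    · have := (pc2_sub (a := a-b-c) (b := b) (c := c) (σ := σ) (u := v) hc h).1
      linarith
  unfold Ti
  rw [R_ph_ge ha hb hc hj hge h2]
  fin_cases k
  · exact absurd rfl hk
  · cases σ <;> simp only [pc, mem_Ico, Bool.not_true, Bool.not_false, Fin.mk_one] at h ⊢
    · rw [Sm4 ha hb hc (by linarith [h.1]) (by linarith [h.2])]
      constructor <;> linarith [h.1, h.2]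
    · rw [Sm3 ha hb hc (by linarith [h.1]) (by linarith [h.2])]
      constructor <;> linarith [h.1, h.2]
  · cases σ <;> simp only [pc, mem_Ico, Bool.not_true, Bool.not_false, Fin.reduceFinMk] at h ⊢
    · rw [Sm6 ha hb hc (by linarith [h.1])]
      constructor <;> linarith [h.1, h.2]
    · rw [Sm5 ha hb hc (by linarith [h.1]) (by linarith [h.2])]
      constructor <;> linarith [h.1, h.2]


lemma hit0 {a b c : ℝ} (ha : 0 < a) (hb : 0 < b) (hc : 0 < c) {F : Filter ℝ} (hF : FInv a b c F) (hj : b + c < a)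
    : ∃ σ, Hit F (pc a b c 0 σ) := by
  by_contra! h
  have h01 := h true
  have h00 := h false
  simp only [Hit, not_frequently, pc, mem_Ico] at h01 h00
  have : ∀ᶠ u in F, False := by
    filter_upwards [hF.dom, h01, h00, hF.ti.eventually h01, hF.ti.eventually h00]
      with u a0 a1 a2 a3 a4
    have hua : a ≤ u := by
      by_contra! hu
      rcases lt_or_ge u (a/2) with h | h
      · exact a1 ⟨a0.1, h⟩
      · exact a2 ⟨h, hu⟩
    have := Ti_J ha hb hc hj hua a0.2
    rcases lt_or_ge (Ti a b c u) (a/2) with h | h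
    · exact a3 ⟨this.1, h⟩
    · exact a4 ⟨h, this.2.1⟩
  exact hF.ne.ne (by simpa using this)

lemma hit0' {a b c : ℝ} (ha : 0 < a) (hb : 0 < b) (hc : 0 < c) {F : Filter ℝ} (hF : FInv a b c F) (hj : b + c < a)
    : Hit F (Ico 0 a) := by
  obtain ⟨σ, h⟩ := hit0 ha hb hc hF hj
  refine h.mono ?_
  intro u hu
  cases σ <;> simp only [pc, mem_Ico] at hu ⊢ <;> constructor <;> linarith [hu.1, hu.2]

lemma hit0_both {a b c : ℝ} (ha : 0 < a) (hb : 0 < b) (hc : 0 < c) {F : Filter ℝ} (hF : FInv a b c F) (hj : b + c < a)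
    (h : ∀ k, ∃ σ, Hit F (pc a b c k σ)) (σ : Bool) : Hit F (pc a b c 0 σ) := by
  obtain ⟨s1, h1⟩ := h 1
  obtain ⟨s2, h2⟩ := h 2
  cases σ
  · rcases le_or_gt c b with hbc | hbc
    · refine hit_of (D := univ) hF.tm (by simp) h2 (fun u _ hu => ?_)
      have hu := pc2_sub hc hu
      have hs := Sm_I2 ha hb hc hj hu.1 hu.2
      rw [Tm_J ha hb hc hj rfl (by linarith) hs.2]
      simp only [pc, mem_Ico]; constructor <;> linarith
    · refine hit_of (D := univ) hF.ti (by simp) h1 (fun u _ hu => ?_)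
      have hu := pc1_sub hb hu
      have hs := Ti_J ha hb hc hj hu.1 (by linarith)
      exact ⟨hs.2.2.1 (by linarith), hs.2.1⟩
  · rcases le_or_gt c b with hbc | hbc
    · refine hit_of (D := univ) hF.ti (by simp) h2 (fun u _ hu => ?_)
      have hu := pc2_sub hc hu
      have hs := Ti_J ha hb hc hj (by linarith) hu.2
      exact ⟨hs.1, hs.2.2.2 (by linarith)⟩
    · refine hit_of (D := univ) hF.tm (by simp) h1 (fun u _ hu => ?_)
      have hu := pc1_sub hb hu
      have hs := Sm_I1 ha hb hc hj hu.1 hu.2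
      rw [Tm_J ha hb hc hj rfl hs.1 (by linarith)]
      simp only [pc, mem_Ico]; constructor <;> linarith

lemma step_ok {a b c : ℝ} (ha : 0 < a) (hb : 0 < b) (hc : 0 < c) {F : Filter ℝ} (hF : FInv a b c F) (hj : b + c < a)
    : StepOK a b c (a-b-c) b c 0 F (pull (ph a b c) F (Ico 0 a)) := by
  have hdom := hF.dom
  set G := pull (ph a b c) F (Ico 0 a) with hG
  have hf : Tendsto (ph a b c) G F := pull_tendsto _ _ _
  have hd : ∀ᶠ v in G, v ∈ Ico 0 a := pull_dom _ _ _
  have ha' : 0 < a - b - c := by linarith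
  refine ⟨⟨?_, ?_, ?_, ?_⟩, ?_, hit0 ha hb hc hF hj, hit0_both ha hb hc hF hj, ?_⟩
  · exact pull_neBot (hit0' ha hb hc hF hj) (fun u hu => ph_sur ha hb hc hj hu.1 hu.2)
  · filter_upwards [hd] with v hv
    exact ⟨hv.1, by linarith [hv.2]⟩
  · refine pull_map hF.ti (fun v hv => ?_) (fun v hv => ?_)
    · have := Tm_mem ha' hb hc hv.1 (by linarith [hv.2])
      exact ⟨this.1, by linarith [this.2]⟩
    · rcases lt_or_ge v (a-b-c) with h | h
      · exact Or.inl (ph_Tm_lt ha hb hc hj hv.1 h)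
      · exact Or.inr (ph_Tm_ge ha hb hc hj h hv.2)
  · refine pull_map hF.tm (fun v hv => ?_) (fun v hv => ?_)
    · have := Ti_mem ha' hb hc hv.1 (by linarith [hv.2])
      exact ⟨this.1, by linarith [this.2]⟩
    · rcases lt_or_ge (Rm a v) (a-b-c) with h | h
      · exact Or.inl (ph_Ti_lt ha hb hc hj hv.1 hv.2 h)
      · exact Or.inr (ph_Ti_ge ha hb hc hj hv.1 hv.2 h)
  · intro k σ h
    by_cases hk : k = 0
    · subst hk
      refine hit_of hf hd h (fun v hv hv' => ?_)
      unfold ph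
      cases σ <;> simp only [pc, mem_Ico, Bool.not_true, Bool.not_false] at hv' ⊢ <;> split_ifs <;>
        constructor <;> linarith [hv'.1, hv'.2]
    · exact hit_of (hF.ti.comp hf) hd h
        (fun v hv hv' => back_geo ha hb hc hj hv.1 hv.2 k hk σ hv')
  · rintro hit hit' g ⟨p, hp0, hp1, hg, hp⟩
    have hl : a - b - c + b + c = a := by ring
    rw [hl]
    rcases lt_or_ge a (p+g) with h1 | h1
    · rcases lt_or_ge p ((a+b+c)/2) with h2 | h2
      · exfalso
        have := hit' 0 true
        obtain ⟨v, ⟨hv, hv1⟩, hv2⟩ := ((this.and_eventually (hf.eventually hp)).and_eventually hd).exists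
        apply hv1.1
        simp only [pc, mem_Ico] at hv
        unfold ph; split_ifs
        · constructor <;> linarith [hv.1, hv.2]
        · linarith [hv.2]
      · rcases lt_or_ge a (p - (a+b+c)/2 + g) with h3 | h3
        · exfalso
          rcases le_or_gt p a with h4 | h4
          · obtain ⟨u, hu, hv1⟩ := ((hit 1 true).and_eventually hp).exists
            apply hv1.1
            simp only [pc, mem_Ico] at hu
            constructor <;> linarith [hu.1, hu.2]
          · have := hit' 0 false
            obtain ⟨v, ⟨hv, hv1⟩, hv2⟩ := ((this.and_eventually (hf.eventually hp)).and_eventually hd).exists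
            apply hv1.2
            simp only [pc, mem_Ico] at hv
            unfold ph; split_ifs
            · linarith [hv.1]
            · constructor <;> linarith [hv.1, hv.2]
        · obtain ⟨q, hq, hqe⟩ := ph_sur ha hb hc hj (u := p - (a+b+c)/2) (by linarith) (by linarith)
          have hRq := Rm_mem hq.1 hq.2
          refine ⟨Rm a q, hRq.1, hRq.2, by linarith, ?_⟩
          filter_upwards [hf.eventually (hF.tm.eventually hp), hd] with v h5 h6
          have hRv := Rm_mem h6.1 h6.2
          refine Av_Rm hq.1 hq.2 h6.1 h6.2 (by linarith) ?_
          refine Av_ph ha hb hc hj hRv.1 hRv.2 (by rw [hqe]; linarith) hq.1 hq.2 (by rw [hqe]; linarith) ?_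
          rw [hqe, ph_Rm ha hb hc hj h6.1 h6.2]
          intro hcon
          unfold Av Tm Rm at h5
          split_ifs at h5
          · exact h5.1 ⟨by linarith [hcon.1], by linarith [hcon.2]⟩
          · exact h5.2 ⟨by linarith [hcon.1], by linarith [hcon.2]⟩
    · rcases lt_or_ge p a with h2 | h2
      · obtain ⟨q, hq, hqe⟩ := ph_sur ha hb hc hj hp0 h2
        refine ⟨q, hq.1, hq.2, by linarith, ?_⟩
        filter_upwards [hf.eventually hp, hd] with v h5 h6
        refine Av_ph ha hb hc hj h6.1 h6.2 (by rw [hqe]; linarith) hq.1 hq.2 (by rw [hqe]; linarith) ?_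
        rw [hqe]; exact h5.1
      · refine ⟨0, le_rfl, ha, by linarith, Eventually.of_forall fun v => ⟨?_, ?_⟩⟩ <;>
          intro h <;> linarith [h.1, h.2]


lemma step_rot {a b c a' b' c' : ℝ} {j : Fin 3} {F G G' : Filter ℝ} (ha' : 0 < a') (hb' : 0 < b')
    (hc' : 0 < c') (hr : RotOK a b c F G) (hs : StepOK b c a b' c' a' j G G') :
    ∃ F', StepOK a b c a' b' c' (j+1) F F' := by
  have r1 := rot_ok hb' hc' ha' hs.inv
  have r2 := rot_ok hc' ha' hb' r1.inv
  set G1 := pull (ps b' c' a') G' (Ico 0 (c'+a'+b'))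
  set F' := pull (ps c' a' b') G1 (Ico 0 (a'+b'+c'))
  have hit' : ∀ k σ, Hit G' (pc b' c' a' k σ) ↔ Hit F' (pc a' b' c' (k+1) σ) := by
    intro k σ
    rw [← r2.hit, ← r1.hit]
    have : k + 1 + 1 + 1 = k := by fin_cases k <;> rfl
    rw [this]
  have sur : ∀ k : Fin 3, ∃ k', k = k' + 1 := fun k => ⟨k - 1, by simp⟩
  refine ⟨F', r2.inv, ?_, ?_, ?_, ?_⟩
  · intro k σ h
    obtain ⟨k, rfl⟩ := sur k
    rw [hr.hit]
    rw [← hit'] at h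
    exact hs.back _ _ h
  · obtain ⟨σ, h⟩ := hs.hitj
    exact ⟨σ, (hr.hit _ _).2 h⟩
  · intro h σ
    rw [hr.hit]
    refine hs.hit2 (fun k => ?_) σ
    obtain ⟨σ, h⟩ := h (k+1)
    exact ⟨σ, (hr.hit _ _).1 h⟩
  · intro h1 h2 g hg
    exact r2.gap _ (r1.gap _ (hs.gap (fun k σ => (hr.hit _ _).1 (h1 _ _))
      (fun k σ => (hit' _ _).2 (h2 _ _)) g (hr.gap g hg)))

lemma step_all (x : Fin 3 → ℝ) (hx : ∀ i, 0 < x i) (j : Fin 3) (hj : (x 0 + x 1 + x 2)/2 < x j)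
    (F : Filter ℝ) (hF : FInv (x 0) (x 1) (x 2) F) :
    ∃ F', StepOK (x 0) (x 1) (x 2) (ustep j x 0) (ustep j x 1) (ustep j x 2) j F F' := by
  have h0 := hx 0
  have h1 := hx 1
  have h2 := hx 2
  fin_cases j
  · have e : 2 * x 0 - (x 0 + x 1 + x 2) = x 0 - x 1 - x 2 := by ring
    simp [ustep, e] at hj ⊢
    exact ⟨_, step_ok h0 h1 h2 hF (by linarith)⟩
  · have e : 2 * x 1 - (x 0 + x 1 + x 2) = x 1 - x 2 - x 0 := by ring
    simp [ustep, e] at hj ⊢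
    have r := rot_ok h0 h1 h2 hF
    exact step_rot h0 (by linarith) h2 r (step_ok h1 h2 h0 r.inv (by linarith))
  · have e : 2 * x 2 - (x 0 + x 1 + x 2) = x 2 - x 0 - x 1 := by ring
    simp [ustep, e] at hj ⊢
    have r := rot_ok h0 h1 h2 hF
    have r' := rot_ok h1 h2 h0 r.inv
    obtain ⟨G, hG⟩ := step_rot h1 (by linarith) h0 r' (step_ok h2 h0 h1 r'.inv (by linarith))
    exact step_rot h0 h1 (by linarith) r hG


lemma ustep_sum
    (k : Fin 3) (x : Fin 3 → ℝ) :
    ustep k x 0 + ustep k x 1 + ustep k x 2 = x k := by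
  fin_cases k <;> simp [ustep] <;> ring


lemma y_anti {y : ℕ → Fin 3 → ℝ} {j : ℕ → Fin 3} (hpos : ∀ n i, 0 < y n i) (hj : ∀ n, (y n 0 + y n 1 + y n 2)/2 < y n (j n)) (hs : ∀ n, y (n+1) = ustep (j n) (y n))
    (i : Fin 3) : Antitone (fun n => y n i) := by
  refine antitone_nat_of_succ_le fun n => ?_
  rw [hs n]
  unfold ustep
  split_ifs with h
  · have h0 := hpos n 0
    have h1 := hpos n 1
    have h2 := hpos n 2
    rw [h]
    generalize j n = k
    fin_cases k <;> simp <;> linarith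
  · exact le_rfl

lemma sum_drop {y : ℕ → Fin 3 → ℝ} {j : ℕ → Fin 3} (hpos : ∀ n i, 0 < y n i) (hj : ∀ n, (y n 0 + y n 1 + y n 2)/2 < y n (j n)) (hs : ∀ n, y (n+1) = ustep (j n) (y n))
    (n : ℕ) (k : Fin 3) (hk : j n ≠ k) :
    y (n+1) 0 + y (n+1) 1 + y (n+1) 2 + y n k ≤ y n 0 + y n 1 + y n 2 := by
  rw [hs n, ustep_sum]
  have h0 := hpos n 0
  have h1 := hpos n 1
  have h2 := hpos n 2
  revert hk
  generalize j n = l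
  intro hk
  fin_cases l <;> fin_cases k <;> simp at hk ⊢ <;> linarith

lemma letter_io {y : ℕ → Fin 3 → ℝ} {j : ℕ → Fin 3} (hpos : ∀ n i, 0 < y n i) (hj : ∀ n, (y n 0 + y n 1 + y n 2)/2 < y n (j n)) (hs : ∀ n, y (n+1) = ustep (j n) (y n))
    (k : Fin 3) (n : ℕ) : ∃ m, j (n + m) = k := by
  by_contra! h
  have hc : ∀ m, y (n+m) k = y n k := by
    intro m
    induction m with
    | zero => rfl
    | succ m ih =>
      rw [← add_assoc, hs, ← ih]
      unfold ustep
      rw [if_neg (h m).symm]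
  have hd : ∀ m : ℕ, y (n+m) 0 + y (n+m) 1 + y (n+m) 2 + m * y n k ≤ y n 0 + y n 1 + y n 2 := by
    intro m
    induction m with
    | zero => simp
    | succ m ih =>
      have := sum_drop hpos hj hs (n+m) k (h m)
      rw [hc m] at this
      rw [← add_assoc]
      push_cast
      linarith
  obtain ⟨m, hm⟩ := exists_nat_gt ((y n 0 + y n 1 + y n 2) / y n k)
  rw [div_lt_iff₀ (hpos n k)] at hm
  linarith [hd m, hpos (n+m) 0, hpos (n+m) 1, hpos (n+m) 2]

lemma sum_small {y : ℕ → Fin 3 → ℝ} {j : ℕ → Fin 3} (hpos : ∀ n i, 0 < y n i) (hj : ∀ n, (y n 0 + y n 1 + y n 2)/2 < y n (j n)) (hs : ∀ n, y (n+1) = ustep (j n) (y n))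
    {g : ℝ} (hg : 0 < g) : ∃ n, ∀ m, n ≤ m → y m 0 + y m 1 + y m 2 < g := by
  have hA : Antitone (fun n => y n 0 + y n 1 + y n 2) := by
    intro m n h
    have h0 := y_anti hpos hj hs 0 h
    have h1 := y_anti hpos hj hs 1 h
    have h2 := y_anti hpos hj hs 2 h
    simp only at *
    linarith
  have hlim := tendsto_atTop_ciInf hA ⟨0, by
    rintro _ ⟨n, rfl⟩
    have h0 := hpos n 0
    have h1 := hpos n 1
    have h2 := hpos n 2
    simp only
    linarith⟩
  have hdiff := hlim.sub ((tendsto_add_atTop_iff_nat 1).2 hlim)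
  rw [sub_self] at hdiff
  obtain ⟨N, hN⟩ := eventually_atTop.1 (hdiff.eventually (gt_mem_nhds (show (0:ℝ) < g/3 by linarith)))
  have hk : ∀ k : Fin 3, ∃ n, ∀ m, n ≤ m → y m k < g/3 := by
    intro k
    obtain ⟨m, hm⟩ := letter_io hpos hj hs (k+1) N
    refine ⟨N+m, fun m' hm' => lt_of_le_of_lt (y_anti hpos hj hs k hm') ?_⟩
    have h1 := hN (N+m) (by omega)
    have h2 := sum_drop hpos hj hs (N+m) k (by rw [hm]; fin_cases k <;> decide)
    simp only at *
    linarith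
  obtain ⟨n0, h0⟩ := hk 0
  obtain ⟨n1, h1⟩ := hk 1
  obtain ⟨n2, h2⟩ := hk 2
  refine ⟨n0 + n1 + n2, fun m hm => ?_⟩
  linarith [h0 m (by omega), h1 m (by omega), h2 m (by omega)]

lemma step_n {y : ℕ → Fin 3 → ℝ} {j : ℕ → Fin 3} (hpos : ∀ n i, 0 < y n i) (hj : ∀ n, (y n 0 + y n 1 + y n 2)/2 < y n (j n)) (hs : ∀ n, y (n+1) = ustep (j n) (y n))
    (n : ℕ) (F : Filter ℝ) (hF : FInv (y n 0) (y n 1) (y n 2) F) :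
    ∃ F', StepOK (y n 0) (y n 1) (y n 2) (y (n+1) 0) (y (n+1) 1) (y (n+1) 2) (j n) F F' := by
  rw [hs n]
  exact step_all (y n) (hpos n) (j n) (hj n) F hF

lemma hit_some {y : ℕ → Fin 3 → ℝ} {j : ℕ → Fin 3} (hpos : ∀ n i, 0 < y n i) (hj : ∀ n, (y n 0 + y n 1 + y n 2)/2 < y n (j n)) (hs : ∀ n, y (n+1) = ustep (j n) (y n))
    (k : Fin 3) (m : ℕ) : ∀ n, j (n+m) = k → ∀ F,
    FInv (y n 0) (y n 1) (y n 2) F → ∃ σ, Hit F (pc (y n 0) (y n 1) (y n 2) k σ) := by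
  induction m with
  | zero =>
    intro n h F hF
    obtain ⟨F', hS⟩ := step_n hpos hj hs n F hF
    have := hS.hitj
    rw [← h]; exact this
  | succ m ih =>
    intro n h F hF
    obtain ⟨F', hS⟩ := step_n hpos hj hs n F hF
    obtain ⟨σ, h'⟩ := ih (n+1) (by rw [← h]; congr 1; omega) F' hS.inv
    exact ⟨!σ, hS.back _ _ h'⟩

lemma hit_some' {y : ℕ → Fin 3 → ℝ} {j : ℕ → Fin 3} (hpos : ∀ n i, 0 < y n i) (hj : ∀ n, (y n 0 + y n 1 + y n 2)/2 < y n (j n)) (hs : ∀ n, y (n+1) = ustep (j n) (y n))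
    (k : Fin 3) (n : ℕ) (F : Filter ℝ)
    (hF : FInv (y n 0) (y n 1) (y n 2) F) : ∃ σ, Hit F (pc (y n 0) (y n 1) (y n 2) k σ) := by
  obtain ⟨m, hm⟩ := letter_io hpos hj hs k n
  exact hit_some hpos hj hs k m n hm F hF

lemma hit_all {y : ℕ → Fin 3 → ℝ} {j : ℕ → Fin 3} (hpos : ∀ n i, 0 < y n i) (hj : ∀ n, (y n 0 + y n 1 + y n 2)/2 < y n (j n)) (hs : ∀ n, y (n+1) = ustep (j n) (y n))
    (k : Fin 3) (m : ℕ) : ∀ n, j (n+m) = k → ∀ F,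
    FInv (y n 0) (y n 1) (y n 2) F → ∀ σ, Hit F (pc (y n 0) (y n 1) (y n 2) k σ) := by
  induction m with
  | zero =>
    intro n h F hF
    obtain ⟨F', hS⟩ := step_n hpos hj hs n F hF
    have := hS.hit2 (fun k => hit_some' hpos hj hs k n F hF)
    rw [← h]; exact this
  | succ m ih =>
    intro n h F hF σ
    obtain ⟨F', hS⟩ := step_n hpos hj hs n F hF
    have h' := ih (n+1) (by rw [← h]; congr 1; omega) F' hS.inv (!σ)
    have := hS.back _ _ h'
    simpa using this

lemma hit_all' {y : ℕ → Fin 3 → ℝ} {j : ℕ → Fin 3} (hpos : ∀ n i, 0 < y n i) (hj : ∀ n, (y n 0 + y n 1 + y n 2)/2 < y n (j n)) (hs : ∀ n, y (n+1) = ustep (j n) (y n))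
    (k : Fin 3) (n : ℕ) (F : Filter ℝ)
    (hF : FInv (y n 0) (y n 1) (y n 2) F) (σ : Bool) : Hit F (pc (y n 0) (y n 1) (y n 2) k σ) := by
  obtain ⟨m, hm⟩ := letter_io hpos hj hs k n
  exact hit_all hpos hj hs k m n hm F hF σ

lemma no_gap {y : ℕ → Fin 3 → ℝ} {j : ℕ → Fin 3} (hpos : ∀ n i, 0 < y n i) (hj : ∀ n, (y n 0 + y n 1 + y n 2)/2 < y n (j n)) (hs : ∀ n, y (n+1) = ustep (j n) (y n))
    {g : ℝ} (hg : 0 < g) (F : Filter ℝ) (hF : FInv (y 0 0) (y 0 1) (y 0 2) F) :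
    ¬ Gap (y 0 0 + y 0 1 + y 0 2) F g := by
  intro h
  have key : ∀ n, ∃ F', FInv (y n 0) (y n 1) (y n 2) F' ∧ Gap (y n 0 + y n 1 + y n 2) F' g := by
    intro n
    induction n with
    | zero => exact ⟨F, hF, h⟩
    | succ n ih =>
      obtain ⟨G, hG, hgap⟩ := ih
      obtain ⟨F', hS⟩ := step_n hpos hj hs n G hG
      exact ⟨F', hS.inv, hS.gap (fun k σ => hit_all' hpos hj hs k n G hG σ)
        (fun k σ => hit_all' hpos hj hs k (n+1) F' hS.inv σ) g hgap⟩
  obtain ⟨n, hn⟩ := sum_small hpos hj hs hg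
  obtain ⟨F', _, p, _, _, h3, _⟩ := key n
  linarith [hn n le_rfl]


lemma orbit_inv {a b c : ℝ} (ha : 0 < a) (hb : 0 < b) (hc : 0 < c) (w : ℕ → ℝ)
    (hw : ∀ n, 0 ≤ w n ∧ w n < a+b+c) (hT : ∀ n, w (n+1) = Tm a b c (w n)) :
    FInv a b c (map w atTop) := by
  refine ⟨inferInstance, ?_, ?_, ?_⟩
  · exact Eventually.of_forall (f := atTop) hw
  · rw [tendsto_map'_iff]
    have : Tm a b c ∘ w = w ∘ (fun n => n+1) := by ext n; simp [hT]
    rw [this]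
    exact tendsto_map.comp (tendsto_add_atTop_nat 1)
  · rw [tendsto_map'_iff]
    have : Tendsto (w ∘ (fun n => n-1)) atTop (map w atTop) :=
      tendsto_map.comp (tendsto_sub_atTop_nat 1)
    refine this.congr' ?_
    filter_upwards [eventually_ge_atTop 1] with n hn
    obtain ⟨m, rfl⟩ := Nat.exists_eq_add_of_le' hn
    simp only [Function.comp, Nat.add_sub_cancel]
    rw [hT, Ti_Tm ha hb hc (hw m).1 (hw m).2]

lemma rep_mem (v : AddCircle (1:ℝ)) : 0 ≤ rep v ∧ rep v < 1 := by
  have := (AddCircle.equivIco 1 0 v).2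
  exact ⟨this.1, lt_of_lt_of_eq this.2 (zero_add (1:ℝ))⟩

lemma toCirc_rep (v : AddCircle (1:ℝ)) : toCirc (rep v) = v :=
  (AddCircle.equivIco 1 0).symm_apply_apply v

lemma rep_toCirc {t : ℝ} (h0 : 0 ≤ t) (h1 : t < 1) : rep (toCirc t) = t := by
  unfold rep toCirc
  rw [AddCircle.equivIco_coe_of_mem]
  exact ⟨h0, by simpa using h1⟩

lemma toCirc_sub_one (t : ℝ) : toCirc t = toCirc (t - 1) := by
  unfold toCirc
  rw [AddCircle.coe_sub, AddCircle.coe_period, sub_zero]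

lemma rep_ARmap {a b c : ℝ} (ha : 0 < a) (hb : 0 < b) (hc : 0 < c) (h : a + b + c = 1)
    (v : AddCircle (1:ℝ)) : rep (ARmap a b c v) = Tm a b c (rep v) := by
  have hv := rep_mem v
  have e : ARmap a b c v = toCirc (Sm a b c (rep v) + 1/2) := by
    unfold ARmap Sm
    split_ifs <;> congr 1
  have hm := Sm_mem ha hb hc hv.1 (by rw [h]; exact hv.2)
  rw [e]
  unfold Tm
  rw [h] at hm ⊢
  unfold Rm
  split_ifs with h1
  · exact rep_toCirc (by linarith) (by linarith)
  · rw [toCirc_sub_one, rep_toCirc (by linarith) (by linarith)]; ring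

lemma rep_iter {a b c : ℝ} (ha : 0 < a) (hb : 0 < b) (hc : 0 < c) (h : a + b + c = 1)
    (v : AddCircle (1:ℝ)) (n : ℕ) :
    rep ((ARmap a b c)^[n+1] v) = Tm a b c (rep ((ARmap a b c)^[n] v)) := by
  rw [Function.iterate_succ_apply', rep_ARmap ha hb hc h]

lemma minimal_SMin {a b c : ℝ} (ha : 0 < a) (hb : 0 < b) (hc : 0 < c) (h : a + b + c = 1)
    (hm : IsMinimal (ARmap a b c)) : SMin a b c := by
  intro O ⟨u, hu⟩ hO hT hTi p q hp hpq hq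
  have hop : IsOpen (toCirc '' Ioo p q) :=
    QuotientAddGroup.isOpenMap_coe _ isOpen_Ioo
  obtain ⟨_, ⟨t, ht, rfl⟩, n, hn⟩ := (hm (toCirc u)).inter_open_nonempty _ hop
    ((nonempty_Ioo.2 hpq).image _)
  have hu' := hO u hu
  have horb : ∀ n, rep ((ARmap a b c)^[n] (toCirc u)) ∈ O := by
    intro n
    induction n with
    | zero => simpa [rep_toCirc hu'.1 (by rw [← h]; exact hu'.2)] using hu
    | succ n ih => rw [rep_iter ha hb hc h]; exact hT _ ih
  refine ⟨_, horb n, ?_⟩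
  simp only at hn
  rw [hn, rep_toCirc (by linarith [ht.1]) (by linarith [ht.2])]
  exact ⟨ht.1.le, ht.2⟩

lemma minimal_of_seq {y : ℕ → Fin 3 → ℝ} {j : ℕ → Fin 3} (hpos : ∀ n i, 0 < y n i)
    (hj : ∀ n, (y n 0 + y n 1 + y n 2)/2 < y n (j n)) (hs : ∀ n, y (n+1) = ustep (j n) (y n))
    (hsum : y 0 0 + y 0 1 + y 0 2 = 1) : IsMinimal (ARmap (y 0 0) (y 0 1) (y 0 2)) := by
  intro u
  rw [dense_iff_inter_open]
  rintro V hV ⟨v, hv⟩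
  by_contra hne
  have hav : ∀ n, (ARmap (y 0 0) (y 0 1) (y 0 2))^[n] u ∉ V := fun n hn => hne ⟨_, hn, n, rfl⟩
  have hop : IsOpen (toCirc ⁻¹' V) := hV.preimage (AddCircle.continuous_mk' 1)
  have hmem : rep v ∈ toCirc ⁻¹' V := by rw [mem_preimage, toCirc_rep]; exact hv
  obtain ⟨ε, hε, hball⟩ := Metric.isOpen_iff.1 hop _ hmem
  have hr := rep_mem v
  set w : ℕ → ℝ := fun n => rep ((ARmap (y 0 0) (y 0 1) (y 0 2))^[n] u) with hw
  have hinv := orbit_inv (hpos 0 0) (hpos 0 1) (hpos 0 2) w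
    (fun n => by rw [hsum]; exact rep_mem _) (fun n => rep_iter (hpos 0 0) (hpos 0 1) (hpos 0 2) hsum u n)
  have hg1 := min_le_left ε (1 - rep v)
  have hg2 := min_le_right ε (1 - rep v)
  refine no_gap hpos hj hs (g := min ε (1 - rep v)) (lt_min hε (by linarith)) _ hinv ?_
  rw [hsum]
  refine ⟨rep v, hr.1, hr.2, by linarith, ?_⟩
  refine Eventually.of_forall (f := atTop) fun n => ?_
  have hwn : 0 ≤ w n ∧ w n < 1 := rep_mem _
  refine ⟨?_, ?_⟩
  · rintro ⟨h1, h2⟩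
    apply hav n
    have : w n ∈ toCirc ⁻¹' V := by
      apply hball
      rw [Metric.mem_ball, Real.dist_eq, abs_lt]
      constructor <;> linarith
    rw [mem_preimage, hw, toCirc_rep] at this
    exact this
  · rintro ⟨h1, h2⟩
    linarith

lemma gasket_of_seq {y : ℕ → Fin 3 → ℝ} (hpos : ∀ n i, 0 < y n i) (hsum : y 0 0 + y 0 1 + y 0 2 = 1)
    (hs : ∀ n, ∃ j, (y n 0 + y n 1 + y n 2)/2 < y n j ∧ y (n+1) = ustep j (y n)) :
    InRauzyGasket (y 0) := by
  refine ⟨fun i => (hpos 0 i).le, hsum, fun n i => y n i / (y n 0 + y n 1 + y n 2), ?_, ?_⟩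
  · ext i; simp [hsum]
  · intro n
    obtain ⟨j, h1, h2⟩ := hs n
    have hS : 0 < y n 0 + y n 1 + y n 2 := by
      linarith [hpos n 0, hpos n 1, hpos n 2]
    have hy := hpos n j
    refine ⟨j, ?_, ?_⟩
    · rw [lt_div_iff₀ hS]; linarith
    · ext i
      simp only [h2, ustep_sum]
      unfold rauzyStepAt ustep
      split_ifs
      · field_simp
      · field_simp

lemma seq_of_gasket {x : Fin 3 → ℝ} (hx : ∀ i, 0 < x i) (h : InRauzyGasket x) :
    ∃ (y : ℕ → Fin 3 → ℝ) (j : ℕ → Fin 3), y 0 = x ∧ (∀ n i, 0 < y n i) ∧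
      (∀ n, (y n 0 + y n 1 + y n 2)/2 < y n (j n)) ∧ ∀ n, y (n+1) = ustep (j n) (y n) := by
  obtain ⟨_, hsum, seq, h0, hseq⟩ := h
  choose j hj hs using hseq
  have hpn : ∀ n, (∀ i, 0 < seq n i) ∧ seq n 0 + seq n 1 + seq n 2 = 1 := by
    intro n
    induction n with
    | zero => rw [h0]; exact ⟨hx, hsum⟩
    | succ n ih =>
      have hjn := hj n
      have hp := ih.1 (j n)
      constructor
      · intro i
        rw [hs n]
        unfold rauzyStepAt
        refine div_pos ?_ hp
        split_ifs
        · linarith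
        · exact ih.1 i
      · rw [hs n]
        have := ustep_sum (j n) (seq n)
        unfold ustep at this
        rw [ih.2] at this
        unfold rauzyStepAt
        rw [← add_div, ← add_div, this, div_self hp.ne']
  let L : ℕ → ℝ := fun n => ∏ i ∈ Finset.range n, seq i (j i)
  have hL : ∀ n, 0 < L n := fun n => Finset.prod_pos fun i _ => (hpn i).1 _
  refine ⟨fun n i => L n * seq n i, j, ?_, ?_, ?_, ?_⟩
  · ext i; simp [L, h0]
  · intro n i; exact mul_pos (hL n) ((hpn n).1 i)
  · intro n
    have h1 := hj n
    have h2 := (hpn n).2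
    have : (L n * seq n 0 + L n * seq n 1 + L n * seq n 2)/2 = L n * (1/2) := by
      rw [← h2]; ring
    simp only [this]
    exact mul_lt_mul_of_pos_left h1 (hL n)
  · intro n
    have h2 := (hpn n).2
    have hp := (hpn n).1 (j n)
    have hLs : L (n+1) = L n * seq n (j n) := Finset.prod_range_succ _ _
    ext i
    have e : L n * seq n 0 + L n * seq n 1 + L n * seq n 2 = L n := by
      rw [← mul_add, ← mul_add, h2, mul_one]
    simp only [ustep, e]
    rw [hLs, hs n]
    unfold rauzyStepAt
    split_ifs
    · field_simp
    · field_simp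

/-- Arnoux–Rauzy: `T^{x1,x2,x3}` is minimal iff `(x1,x2,x3)` lies in the Rauzy gasket. -/
theorem statement2 (x1 x2 x3 : ℝ)
    (h1 : 0 < x1) (h2 : 0 < x2) (h3 : 0 < x3) (hsum : x1 + x2 + x3 = 1) :
    IsMinimal (ARmap x1 x2 x3) ↔ InRauzyGasket ![x1, x2, x3] := by
  constructor
  · intro h
    have hS : SMin (![x1, x2, x3] 0) (![x1, x2, x3] 1) (![x1, x2, x3] 2) :=
      minimal_SMin h1 h2 h3 hsum h
    obtain ⟨y, hy0, hpos, hy⟩ := SMin_seq ![x1, x2, x3]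
      (by intro i; fin_cases i <;> simpa) hS
    rw [← hy0]
    exact gasket_of_seq hpos (by rw [hy0]; exact hsum) hy
  · intro h
    obtain ⟨y, j, hy0, hpos, hj, hs⟩ := seq_of_gasket (by intro i; fin_cases i <;> simpa) h
    have := minimal_of_seq hpos hj hs (by rw [hy0]; exact hsum)
    rw [hy0] at this
    exact this

end
end

section
/- Let l1, l2, l3 > 0 with l1 + l2 + l3 = 1, set xj = 1 − 2*lj, and suppose (x1, x2, x3) belongs to the Rauzy gasket 𝓡. Then for every τ ∈ [0, 1/2), every point x ∈ ℝ/ℤ whose forward orbit under F = F_τ^{l1,l2,l3} never meets the three points 0, l1, l1+l2 (mod 1) is periodic: F^n(x) = x for some n ≥ 1. -/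
open Set

noncomputable section

/-- The fully flipped 3-interval exchange transformation `F_τ^{l1,l2,l3}`
(it depends only on `l1`, `l2`, `τ`, since `l3 = 1 - l1 - l2`). -/
def FF (l1 l2 τ : ℝ) (x : AddCircle (1:ℝ)) : AddCircle (1:ℝ) :=
  if rep x < l1 then toCirc (l1 - rep x + τ)
  else if rep x < l1 + l2 then toCirc (2*l1 + l2 - rep x + τ)
  else toCirc (l1 + l2 + 1 - rep x + τ)

/-- One step of the flipped exchange, lifted to `ℝ`, modulo `L = a+b+c`, with open arcs. -/
def StepR (a b c τ x y : ℝ) : Prop :=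
  ∃ k m : ℤ,
    (0 < x + k * (a+b+c) ∧ x + k * (a+b+c) < a ∧
      y + m * (a+b+c) = a - (x + k * (a+b+c)) + τ) ∨
    (a < x + k * (a+b+c) ∧ x + k * (a+b+c) < a + b ∧
      y + m * (a+b+c) = 2*a + b - (x + k * (a+b+c)) + τ) ∨
    (a + b < x + k * (a+b+c) ∧ x + k * (a+b+c) < a + b + c ∧
      y + m * (a+b+c) = 2*a + 2*b + c - (x + k * (a+b+c)) + τ)

/-- Every infinite chain closes up modulo `L`. -/
def AllPer (a b c τ : ℝ) : Prop :=
  ∀ u : ℕ → ℝ, (∀ n, StepR a b c τ (u n) (u (n+1))) →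
    ∃ n : ℕ, 1 ≤ n ∧ ∃ m : ℤ, u n + m * (a+b+c) = u 0

lemma int_eq_of_window {L x : ℝ} {k k' : ℤ} (hL : 0 < L)
    (h : x + k * L - (x + k' * L) < L) (h' : x + k' * L - (x + k * L) < L) : k = k' := by
  have h1 : ((k:ℝ) - k') * L < 1 * L := by linarith
  have h2 : ((k':ℝ) - k) * L < 1 * L := by linarith
  have h3 := lt_of_mul_lt_mul_right h1 hL.le
  have h4 := lt_of_mul_lt_mul_right h2 hL.le
  have h5 : k - k' < 1 := by exact_mod_cast h3
  have h6 : k' - k < 1 := by exact_mod_cast h4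
  omega

lemma stepA {a b c τ x y z : ℝ} (ha : 0 < a) (hb : 0 < b) (hc : 0 < c)
    (h : StepR a b c τ x y) (k : ℤ) (hz : x + k * (a+b+c) = z) (h0 : 0 ≤ z) (h1 : z ≤ a) :
    0 < z ∧ z < a ∧ ∃ m : ℤ, y + m * (a+b+c) = a - z + τ := by
  obtain ⟨k', m, h⟩ := h
  have hk : k = k' := by
    apply int_eq_of_window (x := x) (L := a+b+c) (by linarith) <;>
    rcases h with h | h | h <;> linarith [h.1, h.2.1]
  subst hk
  rw [hz] at h
  rcases h with h | h | h
  · exact ⟨h.1, h.2.1, m, h.2.2⟩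
  · linarith [h.1]
  · linarith [h.1]

lemma stepB {a b c τ x y z : ℝ} (ha : 0 < a) (hb : 0 < b) (hc : 0 < c)
    (h : StepR a b c τ x y) (k : ℤ) (hz : x + k * (a+b+c) = z) (h0 : a ≤ z) (h1 : z ≤ a + b) :
    a < z ∧ z < a + b ∧ ∃ m : ℤ, y + m * (a+b+c) = 2*a + b - z + τ := by
  obtain ⟨k', m, h⟩ := h
  have hk : k = k' := by
    apply int_eq_of_window (x := x) (L := a+b+c) (by linarith) <;>
    rcases h with h | h | h <;> linarith [h.1, h.2.1]
  subst hk
  rw [hz] at h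
  rcases h with h | h | h
  · linarith [h.2.1]
  · exact ⟨h.1, h.2.1, m, h.2.2⟩
  · linarith [h.1]

lemma stepC {a b c τ x y z : ℝ} (ha : 0 < a) (hb : 0 < b) (hc : 0 < c)
    (h : StepR a b c τ x y) (k : ℤ) (hz : x + k * (a+b+c) = z)
    (h0 : a + b ≤ z) (h1 : z ≤ a + b + c) :
    a + b < z ∧ z < a + b + c ∧ ∃ m : ℤ, y + m * (a+b+c) = 2*a + 2*b + c - z + τ := by
  obtain ⟨k', m, h⟩ := h
  have hk : k = k' := by
    apply int_eq_of_window (x := x) (L := a+b+c) (by linarith) <;>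
    rcases h with h | h | h <;> linarith [h.1, h.2.1]
  subst hk
  rw [hz] at h
  rcases h with h | h | h
  · linarith [h.2.1]
  · linarith [h.2.1]
  · exact ⟨h.1, h.2.1, m, h.2.2⟩

lemma step_window {a b c τ x y : ℝ} (ha : 0 < a) (hb : 0 < b) (hc : 0 < c)
    (h : StepR a b c τ x y) :
    ∃ k : ℤ, 0 < x + k * (a+b+c) ∧ x + k * (a+b+c) < a + b + c := by
  obtain ⟨k, m, h⟩ := h
  refine ⟨k, ?_⟩
  rcases h with h | h | h <;> constructor <;> linarith [h.1, h.2.1]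

/-- Backward determinism. -/
lemma step_inj {a b c τ x y x' y' : ℝ} (ha : 0 < a) (hb : 0 < b) (hc : 0 < c)
    (h : StepR a b c τ x y) (h' : StepR a b c τ x' y') (m : ℤ) (hy : y' + m * (a+b+c) = y) :
    ∃ m : ℤ, x' + m * (a+b+c) = x := by
  obtain ⟨k, n, h⟩ := h
  obtain ⟨k', n', h'⟩ := h'
  have key : n + m = n' := by
    apply int_eq_of_window (x := y') (L := a+b+c) (by linarith) <;> push_cast <;>
    rcases h with h | h | h <;> rcases h' with h' | h' | h' <;>
      linarith [h.1, h.2.1, h.2.2, h'.1, h'.2.1, h'.2.2]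
  have e : y + n * (a+b+c) = y' + n' * (a+b+c) := by
    rw [← key, ← hy]; push_cast; ring
  refine ⟨k' - k, ?_⟩
  push_cast
  rcases h with h | h | h <;> rcases h' with h' | h' | h' <;>
      linarith [h.1, h.2.1, h.2.2, h'.1, h'.2.1, h'.2.2]

lemma step_rot_s12 {a b c τ x y : ℝ} (h : StepR a b c τ x y) :
    StepR b c a τ (x - a) (y - a) := by
  obtain ⟨k, m, h⟩ := h
  rcases h with h | h | h
  · refine ⟨k+1, m+1, Or.inr (Or.inr ?_)⟩
    push_cast
    refine ⟨?_, ?_, ?_⟩ <;> linarith [h.1, h.2.1, h.2.2]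
  · refine ⟨k, m, Or.inl ?_⟩
    refine ⟨?_, ?_, ?_⟩ <;> linarith [h.1, h.2.1, h.2.2]
  · refine ⟨k, m, Or.inr (Or.inl ?_)⟩
    refine ⟨?_, ?_, ?_⟩ <;> linarith [h.1, h.2.1, h.2.2]

lemma allPer_rot {a b c τ : ℝ} (h : AllPer b c a τ) : AllPer a b c τ := by
  intro u hu
  obtain ⟨n, hn, m, hm⟩ := h (fun n => u n - a) (fun n => step_rot_s12 (hu n))
  refine ⟨n, hn, m, ?_⟩
  linarith

lemma base_three {a b c τ : ℝ} (ha : 0 < a) (hb : 0 < b) (hc : 0 < c)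
    (hτ : 0 ≤ τ) (hτa : τ ≤ a) (hτb : τ ≤ b) (hτc : τ ≤ c)
    {u : ℕ → ℝ} (hu : ∀ n, StepR a b c τ (u n) (u (n+1))) (n : ℕ) (k : ℤ) (z : ℝ)
    (hz : u n + k * (a+b+c) = z) (h0 : 0 ≤ z) (h1 : z ≤ τ) :
    ∃ k : ℤ, u (n+3) + k * (a+b+c) = τ - z := by
  obtain ⟨p, q, k1, e1⟩ := stepA ha hb hc (hu n) k hz (by linarith) (by linarith)
  obtain ⟨p, q, k2, e2⟩ := stepB ha hb hc (hu (n+1)) k1 e1 (by linarith) (by linarith)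
  obtain ⟨p, q, k3, e3⟩ := stepC ha hb hc (hu (n+1+1)) k2 e2 (by linarith) (by linarith)
  refine ⟨k3 - 1, ?_⟩
  push_cast
  have : n + 3 = n+1+1+1 := rfl
  rw [this]
  linarith

lemma base_A {a b c τ : ℝ} (ha : 0 < a) (hb : 0 < b) (hc : 0 < c)
    (hτ : 0 ≤ τ) (hτa : τ ≤ a) (hτb : τ ≤ b) (hτc : τ ≤ c)
    {u : ℕ → ℝ} (hu : ∀ n, StepR a b c τ (u n) (u (n+1))) (k : ℤ) (z : ℝ)
    (hz : u 0 + k * (a+b+c) = z) (h0 : 0 ≤ z) (h1 : z ≤ a) :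
    ∃ n : ℕ, 1 ≤ n ∧ ∃ m : ℤ, u n + m * (a+b+c) = u 0 := by
  rcases le_total z τ with h | h
  · obtain ⟨k1, e1⟩ := base_three ha hb hc hτ hτa hτb hτc hu 0 k z hz h0 h
    obtain ⟨k2, e2⟩ := base_three ha hb hc hτ hτa hτb hτc hu (0+3) k1 _ e1
      (by linarith) (by linarith)
    refine ⟨0+3+3, by norm_num, k2 - k, ?_⟩
    push_cast
    linarith
  · obtain ⟨p, q, k1, e1⟩ := stepA ha hb hc (hu 0) k hz h0 h1
    obtain ⟨p, q, k2, e2⟩ := stepA ha hb hc (hu (0+1)) k1 e1 (by linarith) (by linarith)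
    refine ⟨0+1+1, by norm_num, k2 - k, ?_⟩
    push_cast
    linarith

lemma allPer_base {a b c τ : ℝ} (ha : 0 < a) (hb : 0 < b) (hc : 0 < c)
    (hτ : 0 ≤ τ) (hτa : τ ≤ a) (hτb : τ ≤ b) (hτc : τ ≤ c) : AllPer a b c τ := by
  intro u hu
  obtain ⟨k, hk⟩ := step_window ha hb hc (hu 0)
  rcases le_total (u 0 + k * (a+b+c)) a with h | h
  · exact base_A ha hb hc hτ hτa hτb hτc hu k _ rfl hk.1.le h
  · rcases le_total (u 0 + k * (a+b+c)) (a+b) with h' | h'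
    · obtain ⟨n, hn, m, hm⟩ := base_A (u := fun n => u n - a) hb hc ha hτ hτb hτc hτa
        (fun n => step_rot_s12 (hu n)) k (u 0 + k * (a+b+c) - a) (by ring) (by linarith) (by linarith)
      exact ⟨n, hn, m, by linarith⟩
    · obtain ⟨n, hn, m, hm⟩ := base_A (u := fun n => u n - a - b) hc ha hb hτ hτc hτa hτb
        (fun n => step_rot_s12 (step_rot_s12 (hu n))) k (u 0 + k * (a+b+c) - a - b)
        (by ring) (by linarith) (by linarith)
      exact ⟨n, hn, m, by linarith⟩

/-- `x` lies in the section and `v` is its collapsed coordinate. -/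
def Sect (a b c τ x v : ℝ) : Prop :=
  ∃ k m : ℤ,
    (a < x + k * (a+b+c) ∧ a + τ - c < x + k * (a+b+c) ∧ x + k * (a+b+c) < b + τ ∧
      v + m * (b+c-a) = x + k * (a+b+c) - a) ∨
    (a + b + τ < x + k * (a+b+c) ∧ x + k * (a+b+c) < a + b + c ∧
      v + m * (b+c-a) = x + k * (a+b+c) - 2*a)

lemma sect_inj {a b c τ x v x' v' : ℝ} (ha : 0 < a) (hab : a < b) (hac : a < c)
    (haτ : a < τ) (hτ : τ < a + c)
    (h : Sect a b c τ x v) (h' : Sect a b c τ x' v') (m : ℤ) (hv : v' + m * (b+c-a) = v) :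
    ∃ m : ℤ, x' + m * (a+b+c) = x := by
  obtain ⟨k, n, h⟩ := h
  obtain ⟨k', n', h'⟩ := h'
  have key : n + m = n' := by
    apply int_eq_of_window (x := v') (L := b+c-a) (by linarith) <;> push_cast <;>
    rcases h with h | h <;> rcases h' with h' | h' <;>
      linarith [h.1, h.2.1, h.2.2, h'.1, h'.2.1, h'.2.2]
  have e : v + n * (b+c-a) = v' + n' * (b+c-a) := by
    rw [← key, ← hv]; push_cast; ring
  refine ⟨k' - k, ?_⟩
  push_cast
  rcases h with ⟨p1, p2, p3, p4⟩ | ⟨p1, p2, p3⟩ <;>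
    rcases h' with ⟨q1, q2, q3, q4⟩ | ⟨q1, q2, q3⟩ <;> linarith

lemma sect_of_A {a b c τ : ℝ} (ha : 0 < a) (hab : a < b) (hac : a < c)
    (haτ : a < τ)
    {u : ℕ → ℝ} (hu : ∀ n, StepR a b c τ (u n) (u (n+1))) (n : ℕ) (k : ℤ) (z : ℝ)
    (hz : u n + k * (a+b+c) = z) (h0 : 0 ≤ z) (h1 : z ≤ a) :
    ∃ v, Sect a b c τ (u (n+1)) v := by
  obtain ⟨p, q, k1, e1⟩ := stepA ha (by linarith) (by linarith) (hu n) k hz h0 h1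
  refine ⟨a - z + τ - a, k1, 0, Or.inl ?_⟩
  rw [e1]
  refine ⟨?_, ?_, ?_, ?_⟩
  · linarith
  · linarith
  · linarith
  · push_cast; ring

lemma sect_exists {a b c τ : ℝ} (ha : 0 < a) (hab : a < b) (hac : a < c)
    (haτ : a < τ) (hτ : τ < a + c)
    {u : ℕ → ℝ} (hu : ∀ n, StepR a b c τ (u n) (u (n+1))) :
    ∃ n v, Sect a b c τ (u n) v := by
  have hb : 0 < b := by linarith
  have hc : 0 < c := by linarith
  obtain ⟨k, hk0, hk1⟩ := step_window ha hb hc (hu 0)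
  obtain ⟨z, hz⟩ : ∃ z, u 0 + k * (a+b+c) = z := ⟨_, rfl⟩
  rw [hz] at hk0 hk1
  rcases le_or_gt z a with h | h
  · exact ⟨_, sect_of_A ha hab hac haτ hu 0 k z hz hk0.le h⟩
  rcases le_or_gt z (a + τ - c) with h2 | h2
  · obtain ⟨p, q, k1, e1⟩ := stepB ha hb hc (hu 0) k hz (by linarith) (by linarith)
    refine ⟨_, sect_of_A ha hab hac haτ hu (0+1) (k1-1) (2*a + b - z + τ - (a+b+c)) ?_ ?_ ?_⟩
    · push_cast; linarith
    · linarith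
    · linarith
  rcases lt_or_ge z (b + τ) with h3 | h3
  · refine ⟨0, z - a, k, 0, Or.inl ?_⟩
    rw [hz]
    exact ⟨h, h2, h3, by push_cast; ring⟩
  rcases le_or_gt z (a + b + τ) with h4 | h4
  · obtain ⟨p, q, k1, e1⟩ := stepC ha hb hc (hu 0) k hz (by linarith) (by linarith)
    refine ⟨_, sect_of_A ha hab hac haτ hu (0+1) (k1-1)
      (2*a + 2*b + c - z + τ - (a+b+c)) ?_ ?_ ?_⟩
    · push_cast; linarith
    · linarith
    · linarith
  · refine ⟨0, z - 2*a, k, 0, Or.inr ?_⟩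
    rw [hz]
    exact ⟨h4, hk1, by push_cast; ring⟩

lemma sect_next {a b c τ : ℝ} (ha : 0 < a) (hab : a < b) (hac : a < c)
    (haτ : a < τ) (hτ : τ < a + c)
    {u : ℕ → ℝ} (hu : ∀ n, StepR a b c τ (u n) (u (n+1))) (n : ℕ) (v : ℝ)
    (hS : Sect a b c τ (u n) v) :
    ∃ n' v', n < n' ∧ Sect a b c τ (u n') v' ∧ StepR a (b-a) (c-a) (τ-a) v v' := by
  have hb : 0 < b := by linarith
  have hc : 0 < c := by linarith
  have hL : a + (b - a) + (c - a) = b + c - a := by ring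
  obtain ⟨k, m, hS⟩ := hS
  obtain ⟨z, hz⟩ : ∃ z, u n + k * (a+b+c) = z := ⟨_, rfl⟩
  rw [hz] at hS
  rcases hS with ⟨h1, h2, h3, h4⟩ | ⟨h1, h2, h3⟩
  · rcases le_total z (a+b) with h5 | h5
    · obtain ⟨p, q, k1, e1⟩ := stepB ha hb hc (hu n) k hz h1.le h5
      rcases le_or_gt z (2*a) with h6 | h6
      · obtain ⟨p, q, k2, e2⟩ := stepC ha hb hc (hu (n+1)) k1 e1 (by linarith) (by linarith)
        obtain ⟨p', q', k3, e3⟩ := stepA (z := z - a) ha hb hc (hu (n+1+1)) (k2-1)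
          (by push_cast; linarith) (by linarith) (by linarith)
        refine ⟨n+1+1+1, a - (z - a) + τ - a, by omega, ⟨k3, 0, Or.inl ?_⟩, m, 0, Or.inl ?_⟩
        · rw [e3]
          refine ⟨?_, ?_, ?_, ?_⟩
          · linarith
          · linarith
          · linarith
          · push_cast; ring
        · rw [hL, h4]
          refine ⟨?_, ?_, ?_⟩
          · linarith
          · linarith
          · push_cast; ring
      · refine ⟨n+1, 2*a + b - z + τ - a, by omega, ⟨k1, 0, Or.inl ?_⟩, m, 0, Or.inr (Or.inl ?_)⟩
        · rw [e1]
          refine ⟨?_, ?_, ?_, ?_⟩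
          · linarith
          · linarith
          · linarith
          · push_cast; ring
        · rw [hL, h4]
          refine ⟨?_, ?_, ?_⟩
          · linarith
          · linarith
          · push_cast; ring
    · obtain ⟨p, q, k1, e1⟩ := stepC ha hb hc (hu n) k hz h5 (by linarith)
      rcases lt_or_ge z (b + c) with h6 | h6
      · have e1' : u (n+1) + ((k1 - 1 : ℤ) : ℝ) * (a+b+c) = a + b + τ - z := by
          push_cast; linarith
        refine ⟨n+1, a + b + τ - z - a, by omega, ⟨k1 - 1, 0, Or.inl ?_⟩, m, 1,
          Or.inr (Or.inr ?_)⟩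
        · rw [e1']
          refine ⟨?_, ?_, ?_, ?_⟩
          · linarith
          · linarith
          · linarith
          · push_cast; ring
        · rw [hL, h4]
          refine ⟨?_, ?_, ?_⟩
          · linarith
          · linarith
          · push_cast; ring
      · obtain ⟨p', q', k2, e2⟩ := stepB (z := a + b + τ - z) ha hb hc (hu (n+1)) (k1 - 1)
          (by push_cast; linarith) (by linarith) (by linarith)
        obtain ⟨p', q', k3, e3⟩ := stepA (z := z - b - c) ha hb hc (hu (n+1+1)) (k2-1)
          (by push_cast; linarith) (by linarith) (by linarith)
        refine ⟨n+1+1+1, a - (z - b - c) + τ - a, by omega, ⟨k3, 0, Or.inl ?_⟩, m - 1, 0,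
          Or.inl ?_⟩
        · rw [e3]
          refine ⟨?_, ?_, ?_, ?_⟩
          · linarith
          · linarith
          · linarith
          · push_cast; ring
        · have h4' : v + ((m - 1 : ℤ) : ℝ) * (b+c-a) = z - b - c := by push_cast; linarith
          rw [hL, h4']
          refine ⟨?_, ?_, ?_⟩
          · linarith
          · linarith
          · push_cast; ring
  · obtain ⟨p, q, k1, e1⟩ := stepC ha hb hc (hu n) k hz (by linarith) (by linarith)
    refine ⟨n+1, 2*a + 2*b + c - z + τ - 2*a, by omega, ⟨k1, 0, Or.inr ?_⟩, m, 0,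
          Or.inr (Or.inr ?_)⟩
    · rw [e1]
      refine ⟨?_, ?_, ?_⟩
      · linarith
      · linarith
      · push_cast; ring
    · rw [hL, h3]
      refine ⟨?_, ?_, ?_⟩
      · linarith
      · linarith
      · push_cast; ring

lemma chain_back {a b c τ : ℝ} (ha : 0 < a) (hb : 0 < b) (hc : 0 < c)
    {u : ℕ → ℝ} (hu : ∀ n, StepR a b c τ (u n) (u (n+1))) (p : ℕ) :
    ∀ n : ℕ, (∃ m : ℤ, u (n + p) + m * (a+b+c) = u n) → ∃ m : ℤ, u p + m * (a+b+c) = u 0 := by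
  intro n
  induction n with
  | zero => intro h; simpa using h
  | succ n ih =>
    rintro ⟨m, hm⟩
    have e : n + 1 + p = n + p + 1 := by ring
    rw [e] at hm
    exact ih (step_inj ha hb hc (hu n) (hu (n+p)) m hm)

lemma allPer_step {a b c τ : ℝ} (ha : 0 < a) (hab : a < b) (hac : a < c)
    (haτ : a < τ) (hτ : τ < a + c) (h : AllPer a (b-a) (c-a) (τ-a)) : AllPer a b c τ := by
  intro u hu
  obtain ⟨n0, v0, h0⟩ := sect_exists ha hab hac haτ hτ hu
  let X := {p : ℕ × ℝ // Sect a b c τ (u p.1) p.2}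
  have nx : ∀ p : X, ∃ q : X, p.1.1 < q.1.1 ∧ StepR a (b-a) (c-a) (τ-a) p.1.2 q.1.2 := by
    rintro ⟨⟨n, v⟩, hp⟩
    obtain ⟨n', v', h1, h2, h3⟩ := sect_next ha hab hac haτ hτ hu n v hp
    exact ⟨⟨⟨n', v'⟩, h2⟩, h1, h3⟩
  choose f hf1 hf2 using nx
  let s : ℕ → X := fun n => f^[n] ⟨⟨n0, v0⟩, h0⟩
  have hs : ∀ n, s (n+1) = f (s n) := fun n => Function.iterate_succ_apply' f n _
  have hmono : StrictMono (fun n => (s n).1.1) := by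
    apply strictMono_nat_of_lt_succ
    intro n
    rw [hs]
    exact hf1 _
  obtain ⟨p, hp, m, hm⟩ := h (fun n => (s n).1.2) (fun n => by rw [hs]; exact hf2 _)
  have hL : a + (b - a) + (c - a) = b + c - a := by ring
  rw [hL] at hm
  have hlt : (s 0).1.1 < (s p).1.1 := hmono (by omega)
  obtain ⟨m', hm'⟩ := sect_inj ha hab hac haτ hτ (s 0).2 (s p).2 m hm
  refine ⟨(s p).1.1 - (s 0).1.1, by omega, ?_⟩
  apply chain_back ha (by linarith) (by linarith) hu _ (s 0).1.1
  refine ⟨m', ?_⟩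
  have e : (s 0).1.1 + ((s p).1.1 - (s 0).1.1) = (s p).1.1 := by omega
  rw [e, hm']

/-- Abstract non-normalised subtractive algorithm: sizes tend to zero. -/
lemma sizes_small (X : ℕ → Fin 3 → ℝ) (S : ℕ → ℝ) (j : ℕ → Fin 3)
    (hS : ∀ n, X n 0 + X n 1 + X n 2 = S n) (hpos : ∀ n i, 0 ≤ X n i)
    (hlt : ∀ n i, X n i < S n) (hj : ∀ n, S n / 2 < X n (j n))
    (hstep : ∀ n, S (n+1) = X n (j n)) (hX : ∀ n i, i ≠ j n → X (n+1) i = X n i)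
    (ε : ℝ) (hε : 0 < ε) : ∃ n, S n < ε := by
  by_contra! hc
  have hle : ∀ n i, i ≠ j n → X n i ≤ S n - S (n+1) := by
    intro n i hi
    rw [hstep]
    have := hS n
    have h0 := hpos n 0
    have h1 := hpos n 1
    have h2 := hpos n 2
    generalize j n = q at *
    fin_cases q <;> fin_cases i <;> simp at * <;> linarith
  have hanti : Antitone S := by
    apply antitone_nat_of_succ_le
    intro n
    rw [hstep]
    exact (hlt n _).le
  have hconv := tendsto_atTop_ciInf hanti ⟨ε, by rintro _ ⟨n, rfl⟩; exact hc n⟩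
  have hconv' := hconv.comp (Filter.tendsto_add_atTop_nat 1)
  have hd := hconv.sub hconv'
  rw [sub_self] at hd
  have hev := (hd.eventually (gt_mem_nhds (half_pos hε)))
  obtain ⟨N, hN⟩ := Filter.eventually_atTop.1 hev
  simp only [Function.comp] at hN
  have hjc : ∀ n ≥ N, j (n+1) = j n := by
    intro n hn
    by_contra hne
    have h1 := hX n _ hne
    have h2 := hle n _ hne
    have h3 := hN n hn
    have h4 := hj (n+1)
    have h5 := hc (n+1)
    linarith
  have hdc : ∀ n ≥ N, S (n+1) - S (n+1+1) = S n - S (n+1) := by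
    intro n hn
    have hst := hstep n
    rw [hstep (n+1), hjc n hn]
    have := hS n
    have h' := hS (n+1)
    have hx := hX n
    generalize j n = q at *
    have h0 := hx 0
    have h1 := hx 1
    have h2 := hx 2
    fin_cases q <;> simp at * <;> linarith
  have hd0 : 0 < S N - S (N+1) := by
    rw [hstep]; linarith [hlt N (j N)]
  have hdall : ∀ k, S (N+k) - S (N+k+1) = S N - S (N+1) := by
    intro k
    induction k with
    | zero => rfl
    | succ k ih => rw [← ih]; exact hdc (N+k) (by omega)
  have hlin : ∀ k : ℕ, S (N+k) = S N - k * (S N - S (N+1)) := by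
    intro k
    induction k with
    | zero => simp
    | succ k ih =>
      have := hdall k
      push_cast
      rw [show N + (k+1) = N + k + 1 from rfl]
      linarith
  obtain ⟨k, hk⟩ := exists_nat_gt (S N / (S N - S (N+1)))
  rw [div_lt_iff₀ hd0] at hk
  have := hlin k
  have := hc (N+k)
  linarith

lemma allPer_main (X : ℕ → Fin 3 → ℝ) (S : ℕ → ℝ) (j : ℕ → Fin 3)
    (hS : ∀ n, X n 0 + X n 1 + X n 2 = S n) (hpos : ∀ n i, 0 ≤ X n i)
    (hlt : ∀ n i, X n i < S n) (hj : ∀ n, S n / 2 < X n (j n))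
    (hstep : ∀ n, S (n+1) = X n (j n)) (hX : ∀ n i, i ≠ j n → X (n+1) i = X n i)
    (σ : ℝ) (hσ : 0 < σ) (k : ℕ) : ∀ n, S (n+k) < 2 * σ → 0 ≤ S n / 2 - σ →
      AllPer ((S n - X n 0)/2) ((S n - X n 1)/2) ((S n - X n 2)/2) (S n / 2 - σ) := by
  induction k with
  | zero =>
    intro n h h'
    simp only [add_zero] at h
    linarith
  | succ k ih =>
    intro n h h'
    have ih' := ih (n+1) (by rw [show n + 1 + k = n + (k+1) by ring]; exact h)
    have hS0 := hS n
    have hS1 := hS (n+1)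
    have h0 := hpos n 0
    have h1 := hpos n 1
    have h2 := hpos n 2
    have g0 := hlt n 0
    have g1 := hlt n 1
    have g2 := hlt n 2
    have hjn := hj n
    have hst := hstep n
    have hx0 := hX n 0
    have hx1 := hX n 1
    have hx2 := hX n 2
    generalize j n = q at *
    by_cases hb : S n / 2 - σ ≤ (S n - X n q) / 2
    · apply allPer_base <;> (try fin_cases q) <;> simp at * <;> linarith
    · push Not at hb
      have ih2 := ih' (by rw [hst]; linarith)
      fin_cases q
      · simp at *
        rw [hx1, hx2] at ih2
        apply allPer_step
        iterate 5 linarith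
        convert ih2 using 1 <;> linarith
      · simp at *
        rw [hx0, hx2] at ih2
        apply allPer_rot
        apply allPer_step
        iterate 5 linarith
        apply allPer_rot
        apply allPer_rot
        convert ih2 using 1 <;> linarith
      · simp at *
        rw [hx0, hx1] at ih2
        apply allPer_rot
        apply allPer_rot
        apply allPer_step
        iterate 5 linarith
        apply allPer_rot
        convert ih2 using 1 <;> linarith

lemma allPer_gasket (l1 l2 l3 τ : ℝ)
    (h1 : 0 < l1) (h2 : 0 < l2) (h3 : 0 < l3) (hsum : l1 + l2 + l3 = 1)
    (hR : InRauzyGasket ![1 - 2*l1, 1 - 2*l2, 1 - 2*l3])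
    (hτ0 : 0 ≤ τ) (hτ : τ < 1/2) : AllPer l1 l2 l3 τ := by
  obtain ⟨hnn, hs, seq, hseq0, hseq⟩ := hR
  choose j hj hnext using hseq
  have inv : ∀ n, seq n 0 + seq n 1 + seq n 2 = 1 ∧ (∀ i, 0 ≤ seq n i) ∧ ∀ i, seq n i < 1 := by
    intro n
    induction n with
    | zero =>
      rw [hseq0]
      refine ⟨hs, hnn, ?_⟩
      intro i
      fin_cases i <;> simp <;> linarith
    | succ n ih =>
      obtain ⟨a1, a2, a3⟩ := ih
      have hjn := hj n
      have hp : 0 < seq n (j n) := by linarith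
      rw [hnext n]
      have b0 := a2 0
      have b1 := a2 1
      have b2 := a2 2
      have c0 := a3 0
      have c1 := a3 1
      have c2 := a3 2
      generalize j n = q at *
      refine ⟨?_, ?_, ?_⟩
      · simp only [rauzyStepAt]
        rw [← add_div, ← add_div, div_eq_one_iff_eq hp.ne']
        fin_cases q <;> simp <;> linarith
      · intro i
        simp only [rauzyStepAt]
        apply div_nonneg _ hp.le
        split_ifs
        · linarith
        · exact a2 i
      · intro i
        simp only [rauzyStepAt]
        rw [div_lt_one hp]
        fin_cases q <;> fin_cases i <;> simp at * <;> linarith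
  let S : ℕ → ℝ := fun n => ∏ i ∈ Finset.range n, seq i (j i)
  have hSs : ∀ n, S (n+1) = S n * seq n (j n) := fun n => Finset.prod_range_succ _ _
  have hSp : ∀ n, 0 < S n := fun n => Finset.prod_pos (fun i _ => by linarith [hj i])
  let X : ℕ → Fin 3 → ℝ := fun n i => S n * seq n i
  have c1 : ∀ n, X n 0 + X n 1 + X n 2 = S n := by
    intro n
    have := (inv n).1
    simp only [X]
    rw [← mul_add, ← mul_add, this, mul_one]
  have c2 : ∀ n i, 0 ≤ X n i := fun n i => mul_nonneg (hSp n).le ((inv n).2.1 i)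
  have c3 : ∀ n i, X n i < S n := fun n i => by
    have := mul_lt_mul_of_pos_left ((inv n).2.2 i) (hSp n)
    simpa [X] using this
  have c4 : ∀ n, S n / 2 < X n (j n) := fun n => by
    have := mul_lt_mul_of_pos_left (hj n) (hSp n)
    simp only [X]
    linarith
  have c5 : ∀ n i, i ≠ j n → X (n+1) i = X n i := by
    intro n i hi
    have hp : seq n (j n) ≠ 0 := by linarith [hj n]
    simp only [X]
    rw [hSs, hnext n]
    simp only [rauzyStepAt, if_neg hi]
    field_simp
  obtain ⟨N, hN⟩ := sizes_small X S j c1 c2 c3 c4 hSs c5 (2 * (1/2 - τ)) (by linarith)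
  have hS0 : S 0 = 1 := by simp [S]
  have := allPer_main X S j c1 c2 c3 c4 hSs c5 (1/2 - τ) (by linarith) N 0
    (by simpa using hN) (by rw [hS0]; linarith)
  simp only [X, hS0, hseq0] at this
  simp at this
  convert this using 1

lemma toCirc_eq_iff (s t : ℝ) : toCirc s = toCirc t ↔ ∃ m : ℤ, t + m = s := by
  unfold toCirc
  rw [← sub_eq_zero, ← AddCircle.coe_sub, AddCircle.coe_eq_zero_iff]
  constructor
  · rintro ⟨m, hm⟩
    refine ⟨m, ?_⟩
    rw [zsmul_eq_mul, mul_one] at hm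
    linarith
  · rintro ⟨m, hm⟩
    refine ⟨m, ?_⟩
    rw [zsmul_eq_mul, mul_one]
    linarith

/-- If `(1-2l1, 1-2l2, 1-2l3)` lies in the Rauzy gasket and `0 ≤ τ < 1/2`, then every
point whose forward orbit under `F_τ^{l1,l2,l3}` avoids the three singularities
`0, l1, l1+l2` is periodic. -/
theorem statement12 (l1 l2 l3 τ : ℝ)
    (h1 : 0 < l1) (h2 : 0 < l2) (h3 : 0 < l3) (hsum : l1 + l2 + l3 = 1)
    (hR : InRauzyGasket ![1 - 2*l1, 1 - 2*l2, 1 - 2*l3])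
    (hτ0 : 0 ≤ τ) (hτ : τ < 1/2) :
    ∀ x : AddCircle (1:ℝ),
      (∀ n : ℕ, (FF l1 l2 τ)^[n] x ≠ toCirc 0 ∧ (FF l1 l2 τ)^[n] x ≠ toCirc l1 ∧
        (FF l1 l2 τ)^[n] x ≠ toCirc (l1 + l2)) →
      ∃ n : ℕ, 1 ≤ n ∧ (FF l1 l2 τ)^[n] x = x := by
  intro x hx
  have rep_spec : ∀ y, toCirc (rep y) = y := fun y => (AddCircle.equivIco 1 0).symm_apply_apply y
  have rep_mem : ∀ y, 0 ≤ rep y ∧ rep y < 1 := fun y => by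
    have := (AddCircle.equivIco 1 0 y).2
    simp only [zero_add] at this
    exact this
  have hP := allPer_gasket l1 l2 l3 τ h1 h2 h3 hsum hR hτ0 hτ
  obtain ⟨n, hn, m, hm⟩ := hP (fun n => rep ((FF l1 l2 τ)^[n] x)) (by
    intro n
    obtain ⟨a0, a1, a2⟩ := hx n
    simp only [Function.iterate_succ_apply']
    generalize (FF l1 l2 τ)^[n] x = y at *
    obtain ⟨r0, r1⟩ := rep_mem y
    have b0 : rep y ≠ 0 := fun h => a0 (by rw [← h, rep_spec])
    have b1 : rep y ≠ l1 := fun h => a1 (by rw [← h, rep_spec])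
    have b2 : rep y ≠ l1 + l2 := fun h => a2 (by rw [← h, rep_spec])
    have d0 := lt_of_le_of_ne r0 (Ne.symm b0)
    have hF := rep_spec (FF l1 l2 τ y)
    by_cases e1 : rep y < l1
    · have hF' : FF l1 l2 τ y = toCirc (l1 - rep y + τ) := by simp only [FF, if_pos e1]
      obtain ⟨m, hm⟩ := (toCirc_eq_iff _ _).1 (hF.trans hF').symm
      refine ⟨0, m, Or.inl ?_⟩
      rw [hsum]
      push_cast
      refine ⟨?_, ?_, ?_⟩ <;> linarith
    · have e1' := lt_of_le_of_ne (not_lt.1 e1) (Ne.symm b1)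
      by_cases e2 : rep y < l1 + l2
      · have hF' : FF l1 l2 τ y = toCirc (2*l1 + l2 - rep y + τ) := by
          simp only [FF, if_neg e1, if_pos e2]
        obtain ⟨m, hm⟩ := (toCirc_eq_iff _ _).1 (hF.trans hF').symm
        refine ⟨0, m, Or.inr (Or.inl ?_)⟩
        rw [hsum]
        push_cast
        refine ⟨?_, ?_, ?_⟩ <;> linarith
      · have e2' := lt_of_le_of_ne (not_lt.1 e2) (Ne.symm b2)
        have hF' : FF l1 l2 τ y = toCirc (l1 + l2 + 1 - rep y + τ) := by
          simp only [FF, if_neg e1, if_neg e2]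
        obtain ⟨m, hm⟩ := (toCirc_eq_iff _ _).1 (hF.trans hF').symm
        refine ⟨0, m, Or.inr (Or.inr ?_)⟩
        rw [hsum]
        push_cast
        refine ⟨?_, ?_, ?_⟩ <;> linarith)
  refine ⟨n, hn, ?_⟩
  rw [hsum, mul_one] at hm
  have h := (toCirc_eq_iff _ _).2 ⟨m, hm⟩
  simp only [rep_spec, Function.iterate_zero, id] at h
  exact h.symm

end
end
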